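/- arXiv:2604.24565 — 2 statements merged into one kernel-verified Lean document; each statement's English description precedes it below -/
import Mathlib

section
/- Let G be a finite group, p a prime, P a Sylow p-subgroup of G, and x ∈ P. If y ∈ Sub_G(x) is conjugate to x in G, then x and y are conjugate in Sub_G(x). -/
/-- A subgroup `H` is subnormal in a subgroup `K` (of an ambient group `G`) if there is a chain
of subgroups `H = H_0 ≤ H_1 ≤ ⋯ ≤ H_t = K` with `H_i` normal in `H_{i+1}` for all `i`. -/
def IsSubnormalIn {G : Type*} [Group G] (H K : Subgroup G) : Prop :=
  ∃ (t : ℕ) (c : Fin (t + 1) → Subgroup G), c 0 = H ∧ c (Fin.last t) = K ∧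
    ∀ i : Fin t, c i.castSucc ≤ c i.succ ∧ ((c i.castSucc).subgroupOf (c i.succ)).Normal

/-- Casolo's subnormalizer set `S_G(x) = {g ∈ G : ⟨x⟩ is subnormal in ⟨x, g⟩}`. -/
def subnormalizerSet {G : Type*} [Group G] (x : G) : Set G :=
  {g | IsSubnormalIn (Subgroup.zpowers x) (Subgroup.closure {x, g})}

/-- The subnormalizer subgroup `Sub_G(x) = ⟨S_G(x)⟩`. -/
def subnormalizerSubgroup {G : Type*} [Group G] (x : G) : Subgroup G :=
  Subgroup.closure (subnormalizerSet x)

/-!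
Two facts about `Sub_G(x)` drive the proof: it contains the normalizer of every nilpotent subgroup
`Q` through `x`, because for `g` normalizing `Q` the group `⟨x⟩` lies in the nilpotent normal
subgroup `Q ∩ ⟨x, g⟩` of `⟨x, g⟩`; and `a(Sub_G(x)) = Sub_G(a(x))` for every automorphism `a`.

Write `S = Sub_G(x)` and let `y = gxg⁻¹ ∈ S`. As `P ≤ S` is Sylow in `S`, there is `h ∈ S` with
`y ∈ hPh⁻¹`. Both `hPh⁻¹` and `gPg⁻¹` contain `y`, so both are Sylow in `Sub_G(y)` and
`gPg⁻¹ = khPh⁻¹k⁻¹` for some `k ∈ Sub_G(y)`. Then `(kh)⁻¹g` normalizes `P`, so it lies in `S`, and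
with it `n = k⁻¹g`. Now `Sub_G(y) = knSn⁻¹k⁻¹ = kSk⁻¹`, so `k ∈ Sub_G(y)` forces `k ∈ S`, and
finally `g = kn ∈ S`: every element conjugating `x` into `S` lies in `S`.
-/

open scoped Pointwise

section

variable {G : Type*} [Group G]

theorem isNilpotent_comap_of_injective {G' : Type*} [Group G'] {f : G →* G'}
    (hf : Function.Injective f) (H : Subgroup G') [Group.IsNilpotent H] :
    Group.IsNilpotent (H.comap f) := by
  have hinj : Function.Injective (f.subgroupComap H) := fun a b hab =>
    Subtype.ext (hf (congrArg Subtype.val hab))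
  exact Subgroup.isNilpotent_of_ker_le_center (f.subgroupComap H)
    ((MonoidHom.ker_eq_bot_iff _).2 hinj ▸ bot_le)

theorem isNilpotent_map {G' : Type*} [Group G'] (f : G →* G') (H : Subgroup G)
    [Group.IsNilpotent H] : Group.IsNilpotent (H.map f) :=
  Group.nilpotent_of_surjective (f.subgroupMap H) (f.subgroupMap_surjective H)

theorem isSubnormal_of_isSubnormal_map {G' : Type*} [Group G'] {f : G →* G'} {H : Subgroup G}
    (hker : f.ker ≤ Subgroup.normalizer H) (h : (H.map f).IsSubnormal) : H.IsSubnormal := by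
  refine .step _ _ (Subgroup.le_comap_map f H) (h.comap f)
    (Subgroup.normal_subgroupOf_of_le_normalizer ?_)
  rw [Subgroup.comap_map_eq]
  exact sup_le Subgroup.le_normalizer hker

theorem isSubnormal_of_isNilpotent [Group.IsNilpotent G] (H : Subgroup G) : H.IsSubnormal := by
  refine Group.nilpotent_center_quotient_ind (P := fun G _ _ => ∀ H : Subgroup G, H.IsSubnormal) G
    (fun _ _ _ _ => .of_subsingleton) (fun G _ _ ih H => ?_) H
  apply isSubnormal_of_isSubnormal_map ?_ (ih (H.map (QuotientGroup.mk' (Subgroup.center G))))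
  rw [QuotientGroup.ker_mk']
  exact Subgroup.center_le_normalizer _

namespace IsSubnormalIn

variable {H K L : Subgroup G}

theorem refl (H : Subgroup G) : IsSubnormalIn H H :=
  ⟨0, fun _ => H, rfl, rfl, fun i => i.elim0⟩

theorem step (hle : H ≤ K) (hnormal : (H.subgroupOf K).Normal) (h : IsSubnormalIn K L) :
    IsSubnormalIn H L := by
  obtain ⟨t, c, rfl, rfl, hc⟩ := h
  exact ⟨t + 1, Fin.cons H c, rfl, rfl, Fin.cases ⟨hle, hnormal⟩ hc⟩

theorem map {G' : Type*} [Group G'] (f : G →* G') (h : IsSubnormalIn H K) :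
    IsSubnormalIn (H.map f) (K.map f) := by
  obtain ⟨t, c, rfl, rfl, hc⟩ := h
  refine ⟨t, fun i => (c i).map f, rfl, rfl, fun i => ?_⟩
  obtain ⟨hle, hnormal⟩ := hc i
  refine ⟨Subgroup.map_mono hle, Subgroup.normal_subgroupOf_of_le_normalizer ?_⟩
  rw [Subgroup.normal_subgroupOf_iff_le_normalizer hle] at hnormal
  exact (Subgroup.map_mono hnormal).trans (Subgroup.le_normalizer_map f)

theorem map_subtype_of_isSubnormal {N : Subgroup K} (h : N.IsSubnormal) :
    IsSubnormalIn (N.map K.subtype) K := by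
  induction h with
  | top => simpa [← MonoidHom.range_eq_map] using refl K
  | step A B hle _ hnormal ih =>
    rw [Subgroup.normal_subgroupOf_iff_le_normalizer hle] at hnormal
    exact step (Subgroup.map_mono hle) (Subgroup.normal_subgroupOf_of_le_normalizer
      ((Subgroup.map_mono hnormal).trans (Subgroup.le_normalizer_map _))) ih

theorem of_le_isNilpotent_of_le_normalizer {Q : Subgroup G} [Group.IsNilpotent Q] (hHQ : H ≤ Q)
    (hHK : H ≤ K) (hK : K ≤ Subgroup.normalizer Q) : IsSubnormalIn H K := by
  have : Group.IsNilpotent (Q.subgroupOf K) :=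
    isNilpotent_comap_of_injective K.subtype_injective Q
  have hsubnormal : (H.subgroupOf K).IsSubnormal :=
    .trans (K := Q.subgroupOf K) (Subgroup.comap_mono hHQ) (isSubnormal_of_isNilpotent _)
      (Subgroup.normal_subgroupOf_of_le_normalizer hK).isSubnormal
  simpa [Subgroup.map_subgroupOf_eq_of_le hHK] using map_subtype_of_isSubnormal hsubnormal

end IsSubnormalIn

section Subnormalizer

variable {x : G}

theorem normalizer_le_subnormalizerSubgroup (Q : Subgroup G) [Group.IsNilpotent Q] (hx : x ∈ Q) :
    Subgroup.normalizer Q ≤ subnormalizerSubgroup x := by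
  intro g hg
  apply Subgroup.subset_closure
  refine IsSubnormalIn.of_le_isNilpotent_of_le_normalizer (Q := Q) (by simpa) ?_ ?_
  · exact Subgroup.zpowers_le.2 (Subgroup.subset_closure (Set.mem_insert x {g}))
  · rw [Subgroup.closure_le, Set.pair_subset_iff]
    exact ⟨Subgroup.le_normalizer hx, hg⟩

theorem le_subnormalizerSubgroup (Q : Subgroup G) [Group.IsNilpotent Q] (hx : x ∈ Q) :
    Q ≤ subnormalizerSubgroup x :=
  Subgroup.le_normalizer.trans (normalizer_le_subnormalizerSubgroup Q hx)

theorem map_subnormalizerSubgroup_le {G' : Type*} [Group G'] (f : G →* G') (x : G) :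
    (subnormalizerSubgroup x).map f ≤ subnormalizerSubgroup (f x) := by
  rw [subnormalizerSubgroup, MonoidHom.map_closure]
  refine Subgroup.closure_mono (Set.image_subset_iff.2 fun g hg => ?_)
  simpa [subnormalizerSet, MonoidHom.map_zpowers, MonoidHom.map_closure, Set.image_pair]
    using IsSubnormalIn.map f hg

theorem smul_subnormalizerSubgroup {α : Type*} [Group α] [MulDistribMulAction α G] (a : α)
    (x : G) : a • subnormalizerSubgroup x = subnormalizerSubgroup (a • x) := by
  have smul_le (b : α) (z : G) : b • subnormalizerSubgroup z ≤ subnormalizerSubgroup (b • z) :=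
    map_subnormalizerSubgroup_le (MulDistribMulAction.toMonoidHom G b) z
  refine le_antisymm (smul_le a x) ?_
  rw [Subgroup.subset_pointwise_smul_iff]
  simpa using smul_le a⁻¹ (a • x)

theorem mem_subnormalizerSubgroup_of_mem_conj_mul {k n : G} (hn : n ∈ subnormalizerSubgroup x)
    (hk : k ∈ subnormalizerSubgroup (k * n * x * (k * n)⁻¹)) : k ∈ subnormalizerSubgroup x := by
  have hsmul : subnormalizerSubgroup (k * n * x * (k * n)⁻¹) =
      MulAut.conj k • subnormalizerSubgroup x := calc
    _ = MulAut.conj (k * n) • subnormalizerSubgroup x :=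
      (smul_subnormalizerSubgroup (MulAut.conj (k * n)) x).symm
    _ = MulAut.conj k • MulAut.conj n • subnormalizerSubgroup x := by rw [map_mul, mul_smul]
    _ = _ := by rw [Subgroup.conj_smul_eq_self_of_mem hn]
  rw [hsmul, Subgroup.mem_pointwise_smul_iff_inv_smul_mem] at hk
  simpa using hk

end Subnormalizer

section Sylow

variable {p : ℕ} [Fact p.Prime] [Finite (Sylow p G)]

theorem exists_mem_le_smul_sylow (P : Sylow p G) {H Q : Subgroup G} (hPH : P ≤ H)
    (hQ : IsPGroup p Q) (hQH : Q ≤ H) : ∃ h ∈ H, Q ≤ (h • P : Sylow p G) := by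
  obtain ⟨R, hR⟩ := (hQ.comap_subtype (K := H)).exists_le_sylow
  obtain ⟨h, rfl⟩ := MulAction.exists_smul_eq H (P.subtype hPH) R
  refine ⟨h, h.2, ?_⟩
  rw [Sylow.smul_subtype, Sylow.coe_subtype] at hR
  exact fun z hz => @hR ⟨z, hQH hz⟩ hz

theorem exists_mem_smul_sylow_eq {P Q : Sylow p G} {H : Subgroup G} (hPH : P ≤ H)
    (hQH : Q ≤ H) : ∃ h ∈ H, h • P = Q := by
  obtain ⟨h, hh, hle⟩ := exists_mem_le_smul_sylow P hPH Q.isPGroup' hQH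
  exact ⟨h, hh, Sylow.ext (Q.is_maximal' (h • P).isPGroup' hle)⟩

theorem exists_mem_subnormalizerSubgroup_smul_sylow_eq {P Q : Sylow p G} [Group.IsNilpotent P]
    [Group.IsNilpotent Q] {x : G} (hxP : x ∈ P) (hxQ : x ∈ Q) :
    ∃ k ∈ subnormalizerSubgroup x, k • P = Q :=
  exists_mem_smul_sylow_eq (le_subnormalizerSubgroup _ hxP) (le_subnormalizerSubgroup _ hxQ)

theorem conj_in_subnormalizer_general (P : Sylow p G) [Group.IsNilpotent P] {x g : G}
    (hx : x ∈ P) (hg : g * x * g⁻¹ ∈ subnormalizerSubgroup x) : g ∈ subnormalizerSubgroup x := by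
  have isNilpotent_smul (a : G) : Group.IsNilpotent (a • P : Sylow p G) :=
    isNilpotent_map _ (P : Subgroup G)
  have hyg : g * x * g⁻¹ ∈ g • P := ⟨x, hx, rfl⟩
  have hy : IsPGroup p (Subgroup.zpowers (g * x * g⁻¹)) :=
    (g • P).isPGroup'.to_le (Subgroup.zpowers_le.2 hyg)
  obtain ⟨h, hh, hyh⟩ := exists_mem_le_smul_sylow P (le_subnormalizerSubgroup _ hx) hy
    (Subgroup.zpowers_le.2 hg)
  obtain ⟨k, hk, hkh⟩ :=
    exists_mem_subnormalizerSubgroup_smul_sylow_eq (Subgroup.zpowers_le.1 hyh) hyg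
  have hnormalizer : h⁻¹ * (k⁻¹ * g) ∈ Subgroup.normalizer P := by
    rw [← Sylow.smul_eq_iff_mem_normalizer, mul_smul, mul_smul, ← hkh, inv_smul_smul,
      inv_smul_smul]
  have hkg : k⁻¹ * g ∈ subnormalizerSubgroup x := by
    simpa using mul_mem hh (normalizer_le_subnormalizerSubgroup (P : Subgroup G) hx hnormalizer)
  have hkx : k ∈ subnormalizerSubgroup x :=
    mem_subnormalizerSubgroup_of_mem_conj_mul hkg (by simpa using hk)
  simpa using mul_mem hkx hkg

end Sylow

end

/-- Let `P` be a Sylow `p`-subgroup of a finite group `G` and `x ∈ P`. If `y ∈ Sub_G(x)` is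
conjugate to `x` in `G`, then `x` and `y` are conjugate in `Sub_G(x)`. -/
theorem conj_in_subnormalizer (G : Type*) [Group G] [Fintype G] (p : ℕ) (hp : p.Prime)
    (P : Sylow p G) (x : G) (hx : x ∈ P) (y : G) (hy : y ∈ subnormalizerSubgroup x)
    (hconj : ∃ g : G, g⁻¹ * x * g = y) :
    ∃ k ∈ subnormalizerSubgroup x, k⁻¹ * x * k = y := by
  have : Fact p.Prime := ⟨hp⟩
  have : Group.IsNilpotent P := P.isPGroup'.isNilpotent
  obtain ⟨g, rfl⟩ := hconj
  exact ⟨g, inv_mem_iff.1 (conj_in_subnormalizer_general P hx (by simpa using hy)), rfl⟩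
end

section
/- Let n be a positive integer, let G = S_n be the symmetric group on n letters, and let P be a Sylow 2-subgroup of G. Then the number of irreducible complex characters of G of odd degree equals |P/P'|, the index of the commutator subgroup of P in P. -/
noncomputable section

open CategoryTheory

/-- The set of irreducible complex characters of the group `G`. -/
def IrrChar (G : Type) [Group G] : Set (G → ℂ) :=
  {χ | ∃ V : FDRep ℂ G, Simple V ∧ χ = FDRep.character V}

/-!
Let `x ∈ Sₙ` have as cycle lengths the powers of two in the binary expansion of `n`. These are
distinct, so their product is the order of the centralizer of `x`. It is also `|P/P'|`: the group
`P` is the product, over the same powers `2^a`, of `a`-fold iterated wreath products of groups of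
order two, and these have abelianizations of order `2^a`.

By Frobenius' formula the irreducible characters are, up to sign, the coefficients of the product
of a Vandermonde determinant and a power sum symmetric polynomial. As each power of two exceeds the
sum of the smaller ones, a partition of `n` is reduced to the empty one by removing hooks of these
lengths in at most one way. Hence the coefficients for `x` are `0` and `±1`, and counting the
nonzero ones shows that `|C(x)|` irreducible characters take a value `±1` at `x`. Column
orthogonality then forces all others to vanish at `x`. Since `x` has `2`-power order,
`χ(1) ≡ χ(x) (mod 2)`, so the characters of odd degree are exactly those with value `±1` at `x`.
-/

section FiniteOrder

open Module End ComplexConjugate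

theorem trace_pow_eq_sum_finrank_eigenspace {K V : Type*} [Field K] [IsAlgClosed K] [CharZero K]
    [AddCommGroup V] [Module K V] [FiniteDimensional K V] {f : End K V} (hf : IsOfFinOrder f)
    (j : ℕ) :
    LinearMap.trace K V (f ^ j)
      = ∑ μ : f.Eigenvalues, (finrank K (f.eigenspace μ) : K) * (μ : K) ^ j := by
  classical
  have hss : f.IsSemisimple := by
    obtain ⟨n, hn, hfn⟩ := isOfFinOrder_iff_pow_eq_one.mp hf
    refine isSemisimple_of_squarefree_aeval_eq_zero
      (Polynomial.X_pow_sub_one_separable_iff.mpr (Nat.cast_ne_zero.mpr hn.ne')).squarefree ?_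
    simp [hfn]
  have hint : DirectSum.IsInternal fun μ : f.Eigenvalues => f.eigenspace μ := by
    exact DirectSum.isInternal_ne_bot_iff.mpr
      (DirectSum.isInternal_submodule_of_iSupIndep_of_iSup_eq_top f.eigenspaces_iSupIndep
        hss.iSup_eigenspace_eq_top)
  have hpow (μ : K) {v : V} (hv : v ∈ f.eigenspace μ) : (f ^ j) v = μ ^ j • v := by
    induction j with
    | zero => simp
    | succ j ih =>
      rw [pow_succ', mul_apply, ih, map_smul, mem_eigenspace_iff.mp hv, smul_smul, pow_succ]
  have hmaps : ∀ μ : f.Eigenvalues, Set.MapsTo (f ^ j) (f.eigenspace μ) (f.eigenspace μ) :=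
    fun μ v hv => hpow μ hv ▸ Submodule.smul_mem _ _ hv
  rw [LinearMap.trace_eq_sum_trace_restrict hint hmaps]
  refine Finset.sum_congr rfl fun μ _ => ?_
  have : (f ^ j).restrict (hmaps μ) = (μ : K) ^ j • LinearMap.id := by
    ext v
    exact hpow μ v.2
  rw [this, map_smul, LinearMap.trace_id, smul_eq_mul, mul_comm]

theorem pow_eq_one_of_hasEigenvalue {K V : Type*} [Field K] [AddCommGroup V] [Module K V]
    {f : End K V} {n : ℕ} (hf : f ^ n = 1) {μ : K} (hμ : f.HasEigenvalue μ) : μ ^ n = 1 := by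
  obtain ⟨v, hv⟩ := hμ.exists_hasEigenvector
  have h : μ ^ n • v = (1 : K) • v := by rw [← hv.pow_apply, hf, one_apply, one_smul]
  exact smul_left_injective K hv.2 h

theorem trace_pow_sub_one_eq_conj_trace {V : Type*} [AddCommGroup V] [Module ℂ V]
    [FiniteDimensional ℂ V] {f : End ℂ V} {n : ℕ} (hn : 0 < n) (hf : f ^ n = 1) :
    LinearMap.trace ℂ V (f ^ (n - 1)) = conj (LinearMap.trace ℂ V f) := by
  have hfin : IsOfFinOrder f := isOfFinOrder_iff_pow_eq_one.mpr ⟨n, hn, hf⟩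
  rw [← pow_one f, ← pow_mul, one_mul, trace_pow_eq_sum_finrank_eigenspace hfin,
    trace_pow_eq_sum_finrank_eigenspace hfin, map_sum]
  refine Finset.sum_congr rfl fun μ _ => ?_
  have hμ : (μ : ℂ) ^ n = 1 := pow_eq_one_of_hasEigenvalue hf μ.2
  have hinv : (μ : ℂ) ^ (n - 1) = (μ : ℂ)⁻¹ :=
    eq_inv_of_mul_eq_one_left (by rw [← pow_succ, Nat.sub_add_cancel hn, hμ])
  rw [hinv, Complex.inv_eq_conj (Complex.norm_eq_one_of_pow_eq_one hμ hn.ne'), map_mul,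
    pow_one, map_natCast]

theorem charP_integralClosure_quotient (p : ℕ) [Fact p.Prime] :
    CharP (integralClosure ℤ ℂ ⧸ Ideal.span {(p : integralClosure ℤ ℂ)}) p := by
  refine CharP.quotient _ p fun hp => ?_
  rw [← map_natCast (algebraMap ℤ (integralClosure ℤ ℂ)), isUnit_map_iff,
    Int.isUnit_iff_natAbs_eq, Int.natAbs_natCast] at hp
  exact (Fact.out : p.Prime).ne_one hp

theorem intCast_dvd_sum_sub_of_pow_char_pow_eq_one {ι : Type*} {s : Finset ι} {c : ι → ℕ}
    {μ : ι → ℂ} (p r : ℕ) [Fact p.Prime] (hμ : ∀ i ∈ s, μ i ^ p ^ r = 1) {m : ℤ}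
    (hm : ∑ i ∈ s, (c i : ℂ) * μ i = m) : (p : ℤ) ∣ ∑ i ∈ s, (c i : ℤ) - m := by
  let A := integralClosure ℤ ℂ
  let q := Ideal.Quotient.mk (Ideal.span {(p : A)})
  have : CharP (A ⧸ Ideal.span {(p : A)}) p := charP_integralClosure_quotient p
  have hint (i : s) : IsIntegral ℤ (μ i) :=
    .of_pow (pow_pos (Fact.out : p.Prime).pos r) (hμ i i.2 ▸ isIntegral_one)
  let ν (i : s) : A := ⟨μ i, hint i⟩
  have hν (i : s) : ν i ^ p ^ r = 1 := Subtype.ext (hμ i i.2)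
  have hsum : ∑ i : s, (c i : A) * ν i = m := by
    apply Subtype.ext
    simpa [ν, ← hm] using Finset.sum_coe_sort s fun i => (c i : ℂ) * μ i
  have hfrob := congrArg (iterateFrobenius (A ⧸ Ideal.span {(p : A)}) p r ∘ q) hsum
  simp only [Function.comp_apply, map_sum, map_mul, map_natCast, map_intCast,
    iterateFrobenius_def, ← map_pow, hν, map_one, mul_one] at hfrob
  rw [← CharP.intCast_eq_zero_iff (A ⧸ Ideal.span {(p : A)}) p, Int.cast_sub, ← hfrob, sub_eq_zero]
  push_cast
  exact (Finset.sum_coe_sort s _).symm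

theorem dvd_finrank_sub_trace {V : Type*} [AddCommGroup V] [Module ℂ V] [FiniteDimensional ℂ V]
    {f : End ℂ V} (p r : ℕ) [Fact p.Prime] (hf : f ^ p ^ r = 1) {m : ℤ}
    (hm : LinearMap.trace ℂ V f = m) : (p : ℤ) ∣ finrank ℂ V - m := by
  have hfin : IsOfFinOrder f :=
    isOfFinOrder_iff_pow_eq_one.mpr ⟨_, pow_pos (Fact.out : p.Prime).pos r, hf⟩
  have hdim : (finrank ℂ V : ℤ) = ∑ μ : f.Eigenvalues, (finrank ℂ (f.eigenspace μ) : ℤ) := by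
    have h := trace_pow_eq_sum_finrank_eigenspace hfin 0
    simp only [pow_zero, mul_one, LinearMap.trace_one] at h
    exact_mod_cast h
  rw [hdim]
  refine intCast_dvd_sum_sub_of_pow_char_pow_eq_one p r
    (fun μ _ => pow_eq_one_of_hasEigenvalue hf μ.2) ?_
  have h := trace_pow_eq_sum_finrank_eigenspace hfin 1
  simp only [pow_one, hm] at h
  exact h.symm

end FiniteOrder

section Subrepresentation

variable {k G V : Type*} [Field k] [Group G] [AddCommGroup V] [Module k V]
  {ρ : Representation k G V}

theorem isCompl_toSubmodule {U W : Subrepresentation ρ} (h : IsCompl U W) :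
    IsCompl U.toSubmodule W.toSubmodule := by
  constructor
  · rw [disjoint_iff, ← Subrepresentation.toSubmodule_inf, h.inf_eq_bot]
    rfl
  · rw [codisjoint_iff, ← Subrepresentation.toSubmodule_sup, h.sup_eq_top]
    rfl

theorem character_eq_add_of_isCompl [FiniteDimensional k V] {U W : Subrepresentation ρ}
    (h : IsCompl U W) :
    ρ.character = U.toRepresentation.character + W.toRepresentation.character := by
  funext g
  let e := Submodule.prodEquivOfIsCompl _ _ (isCompl_toSubmodule h)
  have hg : ρ g = e.conj ((U.toRepresentation g).prodMap (W.toRepresentation g)) := by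
    rw [LinearEquiv.conj_apply, LinearEquiv.eq_comp_toLinearMap_symm]
    ext v
    · simp [e]
      rfl
    · simp [e]
      rfl
  rw [Representation.character, hg, LinearMap.trace_conj', LinearMap.trace_prodMap']
  rfl

theorem finrank_lt_of_isCompl [FiniteDimensional k V] {U W : Subrepresentation ρ}
    (h : IsCompl U W) (hW : W ≠ ⊥) :
    Module.finrank k U.toSubmodule < Module.finrank k V := by
  have hpos : 0 < Module.finrank k W.toSubmodule := by
    rw [Nat.pos_iff_ne_zero, Ne, Submodule.finrank_eq_zero]
    exact fun hbot => hW (Subrepresentation.toSubmodule_injective hbot)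
  have hadd := Submodule.finrank_add_eq_of_isCompl (isCompl_toSubmodule h)
  omega

theorem exists_isCompl_ne_bot [Finite G] [CharZero k] [Nontrivial V] (hρ : ¬ ρ.IsIrreducible) :
    ∃ U W : Subrepresentation ρ, IsCompl U W ∧ U ≠ ⊥ ∧ W ≠ ⊥ := by
  have hss : ρ.IsSemisimpleRepresentation := by
    rw [Representation.isSemisimpleRepresentation_iff_isSemisimpleModule_asModule]
    infer_instance
  have hnt : (⊥ : Subrepresentation ρ) ≠ ⊤ := fun h =>
    bot_ne_top (congrArg Subrepresentation.toSubmodule h : (⊥ : Submodule k V) = ⊤)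
  obtain ⟨U, hbot, htop⟩ : ∃ U : Subrepresentation ρ, U ≠ ⊥ ∧ U ≠ ⊤ := by
    by_contra! hall
    have : Nontrivial (Subrepresentation ρ) := ⟨⊥, ⊤, hnt⟩
    exact hρ ⟨fun U => or_iff_not_imp_left.mpr (hall U)⟩
  obtain ⟨W, hUW⟩ := exists_isCompl U
  exact ⟨U, W, hUW, hbot, fun hW => htop (eq_top_of_isCompl_bot (hW ▸ hUW))⟩

end Subrepresentation

section Characters

open ComplexConjugate

variable {G : Type} [Group G]

theorem eq_of_isConj_of_mem_irrChar {χ : G → ℂ} (hχ : χ ∈ IrrChar G) {x y : G}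
    (hxy : IsConj x y) : χ x = χ y := by
  obtain ⟨V, _, rfl⟩ := hχ
  obtain ⟨c, rfl⟩ := isConj_iff.mp hxy
  exact (V.char_conj x c).symm

theorem prime_dvd_degree_sub_of_mem_irrChar {χ : G → ℂ} (hχ : χ ∈ IrrChar G) (p r : ℕ)
    [Fact p.Prime] {x : G} (hx : x ^ p ^ r = 1) {d m : ℤ} (hd : χ 1 = d) (hm : χ x = m) :
    (p : ℤ) ∣ d - m := by
  obtain ⟨V, _, rfl⟩ := hχ
  have hdim : (Module.finrank ℂ V : ℤ) = d := by
    rw [FDRep.char_one] at hd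
    exact_mod_cast hd
  exact hdim ▸ dvd_finrank_sub_trace p r (by rw [← map_pow, hx, map_one]) hm

theorem card_isConj_mul_card_centralizer (x : G) :
    Nat.card {g // IsConj x g} * Nat.card (Subgroup.centralizer {x}) = Nat.card G := by
  have horbit : Nat.card {g // IsConj x g} = (MulAction.orbit (ConjAct G) x).ncard := by
    rw [ConjAct.orbit_eq_carrier_conjClasses, ← Nat.card_coe_set_eq]
    refine Nat.card_congr (Equiv.subtypeEquivRight fun g => ?_)
    rw [ConjClasses.mem_carrier_iff_mk_eq, ConjClasses.mk_eq_mk_iff_isConj, isConj_comm]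
  rw [horbit, Subgroup.nat_card_centralizer_nat_card_stabilizer, ← MulAction.index_stabilizer,
    Subgroup.index_mul_card]
  rfl

variable [Finite G]

theorem character_mem_irrChar {V : Type} [AddCommGroup V] [Module ℂ V] [FiniteDimensional ℂ V]
    {ρ : Representation ℂ G V} (hρ : ρ.IsIrreducible) : ρ.character ∈ IrrChar G := by
  have := Fintype.ofFinite G
  have hG : (Nat.card G : ℂ) ≠ 0 := NeZero.ne _
  have := invertibleOfNonzero hG
  refine ⟨FDRep.of ρ, ?_, rfl⟩
  rw [FDRep.simple_iff_char_is_norm_one]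
  have horth := Representation.char_orthonormal ρ ρ
  rw [if_pos ⟨Representation.Equiv.refl ρ⟩] at horth
  field_simp at horth
  exact horth.trans (by simp)

theorem apply_inv_of_mem_irrChar {χ : G → ℂ} (hχ : χ ∈ IrrChar G) (g : G) :
    χ g⁻¹ = conj (χ g) := by
  obtain ⟨V, _, rfl⟩ := hχ
  have hinv : g⁻¹ = g ^ (Nat.card G - 1) :=
    inv_eq_of_mul_eq_one_right (by
      rw [← pow_succ', Nat.sub_add_cancel Nat.card_pos, pow_card_eq_one'])
  have htr := trace_pow_sub_one_eq_conj_trace (f := V.ρ g) (n := Nat.card G) Nat.card_pos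
    (by rw [← map_pow, pow_card_eq_one', map_one])
  rwa [← map_pow, ← hinv] at htr

/-- The group of virtual (or generalized) characters: integral combinations of irreducible
characters. -/
def VirtualCharacter (G : Type) [Group G] : Submodule ℤ (G → ℂ) :=
  Submodule.span ℤ (IrrChar G)

theorem character_mem_virtualCharacter {V : Type} [AddCommGroup V] [Module ℂ V]
    [FiniteDimensional ℂ V] (ρ : Representation ℂ G V) : ρ.character ∈ VirtualCharacter G := by
  induction hd : Module.finrank ℂ V using Nat.strong_induction_on generalizing V with
  | _ d ih =>
    subst hd
    by_cases hirr : ρ.IsIrreducible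
    · exact Submodule.subset_span (character_mem_irrChar hirr)
    rcases subsingleton_or_nontrivial V with hV | hV
    · have hzero : ρ.character = 0 := by
        funext g
        rw [Representation.character, Subsingleton.elim (ρ g) 0, map_zero, Pi.zero_apply]
      exact hzero ▸ zero_mem _
    · obtain ⟨U, W, hUW, hU, hW⟩ := exists_isCompl_ne_bot hirr
      rw [character_eq_add_of_isCompl hUW]
      exact add_mem (ih _ (finrank_lt_of_isCompl hUW hW) _ rfl)
        (ih _ (finrank_lt_of_isCompl hUW.symm hU) _ rfl)

theorem card_fixedBy_mem_virtualCharacter (X : Type) [Finite X] [MulAction G X] :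
    (fun g : G => (Nat.card (MulAction.fixedBy X g) : ℂ)) ∈ VirtualCharacter G := by
  classical
  have := Fintype.ofFinite X
  let ρ : Representation ℂ G (X → ℂ) :=
    { toFun := fun g => LinearMap.funLeft ℂ ℂ (fun x => g⁻¹ • x)
      map_one' := by ext; simp [LinearMap.funLeft_apply]
      map_mul' := by intros; ext; simp [LinearMap.funLeft_apply, mul_smul] }
  convert character_mem_virtualCharacter ρ using 1
  funext g
  have hfix (x : X) : x = g⁻¹ • x ↔ g • x = x := eq_inv_smul_iff
  rw [Representation.character, LinearMap.trace_eq_matrix_trace ℂ (Pi.basisFun ℂ X),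
    Nat.card_eq_fintype_card, Fintype.card_subtype]
  simp [Matrix.trace, ρ, LinearMap.funLeft_apply, Pi.single_apply, eq_comm (a := g⁻¹ • _), hfix]

end Characters

section CharacterOrthogonality

open ComplexConjugate InnerProductSpace

variable {G : Type} [Group G] [Fintype G]

variable (G) in
/-- The bilinear form `⟨φ, ψ⟩ = |G|⁻¹ ∑ φ(g) ψ(g⁻¹)` on functions on a finite group. On characters
it agrees with the Hermitian inner product; bilinearity keeps conjugations out of computations with
virtual characters. -/
def charForm : LinearMap.BilinForm ℂ (G → ℂ) :=
  LinearMap.mk₂ ℂ (fun φ ψ => (Nat.card G : ℂ)⁻¹ * ∑ g, φ g * ψ g⁻¹)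
    (fun _ _ _ => by simp only [Pi.add_apply, add_mul, Finset.sum_add_distrib, mul_add])
    (fun _ _ _ => by simp only [Pi.smul_apply, smul_eq_mul, mul_assoc, ← Finset.mul_sum,
      mul_left_comm])
    (fun _ _ _ => by simp only [Pi.add_apply, mul_add, Finset.sum_add_distrib])
    (fun _ _ _ => by simp only [Pi.smul_apply, smul_eq_mul, ← Finset.mul_sum, mul_left_comm])

theorem charForm_apply (φ ψ : G → ℂ) :
    charForm G φ ψ = (Nat.card G : ℂ)⁻¹ * ∑ g, φ g * ψ g⁻¹ :=
  rfl

open scoped Classical in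
theorem charForm_of_mem_irrChar {χ χ' : G → ℂ} (hχ : χ ∈ IrrChar G) (hχ' : χ' ∈ IrrChar G) :
    charForm G χ χ' = if χ = χ' then 1 else 0 := by
  obtain ⟨V, _, rfl⟩ := hχ
  obtain ⟨W, _, rfl⟩ := hχ'
  have := invertibleOfNonzero (NeZero.ne (Nat.card G : ℂ))
  split_ifs with h
  · rw [← h]
    exact (FDRep.char_orthonormal V V).trans (if_pos ⟨Iso.refl _⟩)
  · exact (FDRep.char_orthonormal V W).trans (if_neg fun ⟨i⟩ => h (FDRep.char_iso i))

theorem exists_coeff_of_mem_virtualCharacter {ψ : G → ℂ} (hψ : ψ ∈ VirtualCharacter G) :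
    ∃ (S : Finset (G → ℂ)) (c : (G → ℂ) → ℤ), ↑S ⊆ IrrChar G ∧ (∀ χ ∈ S, c χ ≠ 0) ∧
      ψ = ∑ χ ∈ S, c χ • χ ∧ charForm G ψ ψ = ∑ χ ∈ S, (c χ : ℂ) ^ 2 := by
  obtain ⟨c, hirr, rfl⟩ := Submodule.mem_span_set.mp hψ
  refine ⟨c.support, c, hirr, fun χ hχ => Finsupp.mem_support_iff.mp hχ, rfl, ?_⟩
  simp only [Finsupp.sum, map_sum, map_zsmul, LinearMap.sum_apply, LinearMap.smul_apply]
  refine Finset.sum_congr rfl fun χ hχ => ?_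
  rw [Finset.sum_eq_single_of_mem χ hχ fun χ' hχ' hne => by
    rw [charForm_of_mem_irrChar (hirr hχ') (hirr hχ), if_neg hne, smul_zero],
    charForm_of_mem_irrChar (hirr hχ) (hirr hχ), if_pos rfl, zsmul_eq_mul, zsmul_eq_mul, mul_one,
    sq]

theorem eq_or_eq_neg_of_charForm_self_eq_one {ψ : G → ℂ} (hψ : ψ ∈ VirtualCharacter G)
    (hnorm : charForm G ψ ψ = 1) : ∃ χ ∈ IrrChar G, ψ = χ ∨ ψ = -χ := by
  obtain ⟨S, c, hirr, hc, hsum, hsq⟩ := exists_coeff_of_mem_virtualCharacter hψ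
  have hsq_eq : ∑ χ ∈ S, c χ ^ 2 = 1 := by exact_mod_cast hsq.symm.trans hnorm
  have hcard_le : (S.card : ℤ) ≤ 1 := by
    rw [← hsq_eq, Finset.card_eq_sum_ones, Nat.cast_sum]
    exact Finset.sum_le_sum fun χ hχ => Int.add_one_le_of_lt (sq_pos_of_ne_zero (hc χ hχ))
  have hcard : S.card = 1 := by
    refine le_antisymm (by exact_mod_cast hcard_le) (Finset.card_pos.mpr ?_)
    exact Finset.nonempty_of_sum_ne_zero (hsq_eq ▸ one_ne_zero)
  obtain ⟨χ, rfl⟩ := Finset.card_eq_one.mp hcard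
  rw [Finset.sum_singleton] at hsq_eq hsum
  refine ⟨χ, hirr (Finset.mem_coe.mpr (Finset.mem_singleton_self χ)), ?_⟩
  rcases sq_eq_one_iff.mp hsq_eq with h | h
  · exact .inl (by rw [hsum, h, one_smul])
  · exact .inr (by rw [hsum, h, neg_one_smul])

variable (G) in
/-- The irreducible characters, scaled to unit vectors of the Hilbert space of functions on `G`. -/
def unitCharacter (χ : IrrChar G) : EuclideanSpace ℂ G :=
  (Real.sqrt (Nat.card G) : ℂ)⁻¹ • WithLp.toLp 2 χ.1

theorem orthonormal_unitCharacter : Orthonormal ℂ (unitCharacter G) := by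
  classical
  rw [orthonormal_iff_ite]
  intro χ χ'
  have hscale : ((Real.sqrt (Nat.card G) : ℂ)⁻¹) * (Real.sqrt (Nat.card G) : ℂ)⁻¹ =
      (Nat.card G : ℂ)⁻¹ := by
    rw [← mul_inv, ← Complex.ofReal_mul, Real.mul_self_sqrt (Nat.cast_nonneg _),
      Complex.ofReal_natCast]
  rw [unitCharacter, unitCharacter, inner_smul_left, inner_smul_right, map_inv₀,
    Complex.conj_ofReal, ← mul_assoc, hscale, PiLp.inner_apply]
  have horth := charForm_of_mem_irrChar χ'.2 χ.2
  simp only [charForm_apply, apply_inv_of_mem_irrChar χ.2] at horth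
  simpa [Subtype.ext_iff, eq_comm] using horth

open scoped Classical in
theorem inner_unitCharacter_indicator_isConj (χ : IrrChar G) (x : G) :
    ⟪unitCharacter G χ, WithLp.toLp 2 fun g => if IsConj x g then 1 else 0⟫_ℂ =
      (Real.sqrt (Nat.card G) : ℂ)⁻¹ * (Nat.card {g // IsConj x g} * conj (χ.1 x)) := by
  have hclass (g : G) : (if IsConj x g then (1 : ℂ) else 0) * conj (χ.1 g) =
      if IsConj x g then conj (χ.1 x) else 0 := by
    split_ifs with h
    · rw [one_mul, eq_of_isConj_of_mem_irrChar χ.2 h]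
    · rw [zero_mul]
  simp only [unitCharacter, inner_smul_left, map_inv₀, Complex.conj_ofReal, PiLp.inner_apply,
    RCLike.inner_apply, hclass, ← Finset.sum_filter, Finset.sum_const, nsmul_eq_mul,
    Nat.card_eq_fintype_card, Fintype.card_subtype]

open scoped Classical in
theorem norm_sq_inner_unitCharacter_indicator_isConj (χ : IrrChar G) (x : G) :
    ‖⟪unitCharacter G χ, WithLp.toLp 2 fun g => if IsConj x g then 1 else 0⟫_ℂ‖ ^ 2 =
      Nat.card {g // IsConj x g} ^ 2 / Nat.card G * ‖χ.1 x‖ ^ 2 := by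
  rw [inner_unitCharacter_indicator_isConj]
  simp only [norm_mul, norm_inv, Complex.norm_real, Complex.norm_natCast, RCLike.norm_conj,
    Real.norm_eq_abs, mul_pow, inv_pow, sq_abs, Real.sq_sqrt (Nat.cast_nonneg _)]
  ring

open scoped Classical in
theorem norm_sq_indicator_isConj (x : G) :
    ‖(WithLp.toLp 2 fun g => if IsConj x g then 1 else 0 : EuclideanSpace ℂ G)‖ ^ 2 =
      Nat.card {g // IsConj x g} := by
  rw [EuclideanSpace.norm_sq_eq, Nat.card_eq_fintype_card, Fintype.card_subtype]
  simp [apply_ite]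

end CharacterOrthogonality

section ColumnOrthogonality

variable {G : Type} [Group G] [Finite G]

theorem sum_norm_sq_le_card_centralizer (x : G) {S : Finset (G → ℂ)} (hS : ↑S ⊆ IrrChar G) :
    ∑ χ ∈ S, ‖χ x‖ ^ 2 ≤ Nat.card (Subgroup.centralizer {x}) := by
  classical
  have := Fintype.ofFinite G
  have hmul : (Nat.card {g // IsConj x g} : ℝ) * Nat.card (Subgroup.centralizer {x}) = Nat.card G :=
    mod_cast card_isConj_mul_card_centralizer x
  have hC : (0 : ℝ) < Nat.card (Subgroup.centralizer {x}) := mod_cast Nat.card_pos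
  have hG : (0 : ℝ) < Nat.card G := mod_cast Nat.card_pos
  set N := (Nat.card {g // IsConj x g} : ℝ)
  have hN : 0 < N := pos_of_mul_pos_left (hmul ▸ hG) hC.le
  have hbessel := (orthonormal_unitCharacter (G := G)).sum_inner_products_le
    (s := S.subtype (· ∈ IrrChar G)) (x := WithLp.toLp 2 fun g => if IsConj x g then 1 else 0)
  rw [norm_sq_indicator_isConj] at hbessel
  simp only [norm_sq_inner_unitCharacter_indicator_isConj, ← Finset.mul_sum] at hbessel
  rw [Finset.sum_subtype_of_mem (fun χ => ‖χ x‖ ^ 2) hS, ← hmul] at hbessel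
  have hscale : N ^ 2 / (N * Nat.card (Subgroup.centralizer {x})) =
      N / Nat.card (Subgroup.centralizer {x}) := by
    field_simp
  rw [hscale, div_mul_eq_mul_div, div_le_iff₀ hC] at hbessel
  exact le_of_mul_le_mul_left hbessel hN

theorem apply_eq_zero_of_card_centralizer_le {x : G} {S : Finset (G → ℂ)} (hS : ↑S ⊆ IrrChar G)
    (hnorm : ∀ χ ∈ S, ‖χ x‖ = 1) (hcard : Nat.card (Subgroup.centralizer {x}) ≤ S.card)
    {χ : G → ℂ} (hχ : χ ∈ IrrChar G) (hχS : χ ∉ S) : χ x = 0 := by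
  have h := sum_norm_sq_le_card_centralizer x (S := S.cons χ hχS)
    (by simpa [Set.insert_subset_iff] using ⟨hχ, hS⟩)
  rw [Finset.sum_cons, Finset.sum_congr rfl fun χ hχ => by rw [hnorm χ hχ]] at h
  have hcard' : (Nat.card (Subgroup.centralizer {x}) : ℝ) ≤ S.card := by exact_mod_cast hcard
  have hsq : ‖χ x‖ ^ 2 ≤ 0 := by
    simp only [one_pow, Finset.sum_const, nsmul_eq_mul, mul_one] at h
    linarith
  simpa using hsq.antisymm (sq_nonneg _)

end ColumnOrthogonality

section WreathProduct

open RegularWreathProduct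

variable (D Q : Type*) [Group D] [CommGroup Q]

/-- The inclusion of the base group `Q → D` in the regular wreath product `D ≀ᵣ Q`. -/
def wreathBase : (Q → D) →* D ≀ᵣ Q where
  toFun f := ⟨f, 1⟩
  map_one' := rfl
  map_mul' f g := by ext <;> simp [mul_def]

variable {D Q}

theorem wreathBase_mul_inl (w : D ≀ᵣ Q) : wreathBase D Q w.left * inl w.right = w := by
  ext <;> simp [wreathBase, mul_def]

variable [DecidableEq Q]

theorem conj_inl_wreathBase_mulSingle (q : Q) (d : D) :
    inl q * wreathBase D Q (Pi.mulSingle 1 d) * (inl q)⁻¹ = wreathBase D Q (Pi.mulSingle q d) := by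
  ext x
  · simp [wreathBase, mul_def, Pi.mulSingle_apply, inv_mul_eq_one, eq_comm]
  · simp [wreathBase, mul_def]

variable [Fintype Q]

theorem abelianization_of_wreathBase (f : Q → D) :
    Abelianization.of (wreathBase D Q f) =
      ∏ q, Abelianization.of (wreathBase D Q (Pi.mulSingle 1 (f q))) := by
  let ψ : D →* Abelianization (D ≀ᵣ Q) :=
    Abelianization.of.comp ((wreathBase D Q).comp (MonoidHom.mulSingle (fun _ => D) 1))
  suffices h : Abelianization.of.comp (wreathBase D Q) = ∏ q, ψ.comp (Pi.evalMonoidHom _ q) by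
    exact (DFunLike.congr_fun h f).trans (MonoidHom.finsetProd_apply _ _ _)
  refine MonoidHom.pi_ext fun q d => ?_
  rw [MonoidHom.finsetProd_apply, Finset.prod_eq_single q (fun r _ hr => by simp [hr]) (by simp)]
  have hconj : Abelianization.of (wreathBase D Q (Pi.mulSingle q d)) = ψ d := by
    rw [← conj_inl_wreathBase_mulSingle, map_mul, map_mul, map_inv, mul_inv_cancel_comm]
    rfl
  simpa using hconj

variable (D Q) in
/-- The map from `D ≀ᵣ Q` to its abelianization for commutative `Q`: the coordinates of the base
group become identified, so that a base element is only seen through the product of its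
coordinates. -/
def wreathToAbelianizationProd : D ≀ᵣ Q →* Abelianization D × Q where
  toFun w := (∏ q, Abelianization.of (w.left q), w.right)
  map_one' := by ext <;> simp
  map_mul' v w := by
    ext
    · simp only [mul_left, Pi.mul_apply, map_mul, Prod.fst_mul, Finset.prod_mul_distrib]
      congr 1
      exact Fintype.prod_equiv (Equiv.mulLeft v.right⁻¹) _ _ fun _ => rfl
    · simp

theorem wreathToAbelianizationProd_wreathBase_mul_inl (d : D) (q : Q) :
    wreathToAbelianizationProd D Q (wreathBase D Q (Pi.mulSingle 1 d) * inl q) =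
      (Abelianization.of d, q) := by
  have h : ∏ r, Abelianization.of (Pi.mulSingle (M := fun _ : Q => D) 1 d r) =
      Abelianization.of d := by
    rw [Finset.prod_eq_single 1 (fun r _ hr => by simp [hr]) (by simp), Pi.mulSingle_eq_same]
  simpa [wreathToAbelianizationProd, wreathBase, mul_def] using h

variable (D Q) in
/-- The abelianization of `D ≀ᵣ Q` for commutative `Q`, induced by `wreathToAbelianizationProd`. -/
def abelianizationWreathEquiv : Abelianization (D ≀ᵣ Q) ≃* Abelianization D × Q :=
  MonoidHom.toMulEquiv (Abelianization.lift (wreathToAbelianizationProd D Q))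
    ((Abelianization.lift (Abelianization.of.comp
      ((wreathBase D Q).comp (MonoidHom.mulSingle (fun _ => D) 1)))).coprod
        (Abelianization.of.comp inl))
    (by
      ext w
      simpa [wreathToAbelianizationProd, ← abelianization_of_wreathBase] using
        congrArg Abelianization.of (wreathBase_mul_inl w))
    (by
      refine MonoidHom.ext fun ⟨x, q⟩ => ?_
      obtain ⟨d, rfl⟩ : ∃ d, Abelianization.of d = x := QuotientGroup.mk_surjective x
      exact wreathToAbelianizationProd_wreathBase_mul_inl d q)

theorem index_commutator_congr {A B : Type*} [Group A] [Group B] (e : A ≃* B) :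
    (commutator A).index = (commutator B).index :=
  Nat.card_congr e.abelianizationCongr.toEquiv

theorem index_commutator_prod (A B : Type*) [Group A] [Group B] :
    (commutator (A × B)).index = (commutator A).index * (commutator B).index := by
  rw [← Subgroup.index_prod, commutator_def, ← Subgroup.top_prod_top, Subgroup.commutator_prod_prod,
    commutator_def, commutator_def]

theorem index_commutator_regularWreathProduct (D Q : Type*) [Group D] [CommGroup Q] [Finite Q] :
    (commutator (D ≀ᵣ Q)).index = (commutator D).index * Nat.card Q := by
  classical
  have := Fintype.ofFinite Q
  exact (Nat.card_congr (abelianizationWreathEquiv D Q).toEquiv).trans (Nat.card_prod _ _)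

theorem index_commutator_iteratedWreathProduct (G : Type*) [CommGroup G] [Finite G] (n : ℕ) :
    (commutator (IteratedWreathProduct G n)).index = Nat.card G ^ n := by
  induction n with
  | zero =>
    have : Subsingleton (IteratedWreathProduct G 0) := inferInstanceAs (Subsingleton PUnit)
    rw [Subsingleton.elim (commutator (IteratedWreathProduct G 0)) ⊤, Subgroup.index_top, pow_zero]
  | succ n ih =>
    rw [pow_succ, ← ih]
    exact index_commutator_regularWreathProduct (IteratedWreathProduct G n) G

end WreathProduct

section SylowSymmetric

/-- The product of the powers of two in the binary expansion of `n`, which is the order of the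
centralizer of a permutation with these cycle lengths. -/
def twoPowProd (n : ℕ) : ℕ :=
  (n.bitIndices.map (2 ^ ·)).prod

theorem bitIndices_two_pow_add {a m : ℕ} (hm : m < 2 ^ a) :
    (2 ^ a + m).bitIndices = m.bitIndices ++ [a] := by
  have hlt : ∀ i ∈ m.bitIndices, i < a := fun i hi =>
    (Nat.pow_lt_pow_iff_right Nat.one_lt_two).mp ((Nat.two_pow_le_of_mem_bitIndices hi).trans_lt hm)
  have hsorted : (m.bitIndices ++ [a]).SortedLT := by
    rw [List.sortedLT_iff_pairwise, List.pairwise_append]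
    exact ⟨Nat.bitIndices_sorted.pairwise, List.pairwise_singleton _ _, by simpa using hlt⟩
  rw [← Nat.bitIndices_sum_map_two_pow hsorted]
  simp [add_comm]

theorem twoPowProd_two_pow_add {a m : ℕ} (hm : m < 2 ^ a) :
    twoPowProd (2 ^ a + m) = 2 ^ a * twoPowProd m := by
  simp [twoPowProd, bitIndices_two_pow_add hm, mul_comm]

theorem top_bit_induction {P : ℕ → Prop} (zero : P 0)
    (two_pow_add : ∀ a m, m < 2 ^ a → P m → P (2 ^ a + m)) (n : ℕ) : P n := by
  induction n using Nat.strong_induction_on with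
  | _ n ih =>
    rcases Nat.eq_zero_or_pos n with rfl | hn
    · exact zero
    have hle : 2 ^ Nat.log 2 n ≤ n := Nat.pow_log_le_self 2 hn.ne'
    have hlt : n < 2 ^ (Nat.log 2 n + 1) := Nat.lt_pow_succ_log_self Nat.one_lt_two n
    rw [← Nat.add_sub_cancel' hle]
    exact two_pow_add _ _ (by rw [pow_succ] at hlt; omega) (ih _ (Nat.sub_lt hn (by positivity)))

theorem choose_prime_pow_add_modEq_one {p a m : ℕ} [Fact p.Prime] (hm : m < p ^ a) :
    (p ^ a + m).choose (p ^ a) ≡ 1 [ZMOD p] := by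
  have hp : 0 < p := (Fact.out : p.Prime).pos
  refine (Choose.choose_modEq_choose_mul_prod_range_choose a).trans ?_
  rw [Nat.add_div_left _ (pow_pos hp a), Nat.div_eq_of_lt hm, Nat.div_self (pow_pos hp a),
    Finset.prod_eq_one fun i hi => ?_]
  · rfl
  have hdvd : p ∣ p ^ a / p ^ i := by
    rw [Nat.pow_div (Finset.mem_range.mp hi).le hp]
    exact dvd_pow_self p (Nat.sub_ne_zero_of_lt (Finset.mem_range.mp hi))
  rw [Nat.mod_eq_zero_of_dvd hdvd, Nat.choose_zero_right]

theorem nonempty_sylow_mulEquiv_of_injective {p : ℕ} [Fact p.Prime] {G H : Type*} [Group G]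
    [Group H] [Finite H] {f : G →* H} (hf : Function.Injective f) (hp : ¬p ∣ f.range.index)
    (P : Sylow p G) (Q : Sylow p H) : Nonempty (P ≃* Q) := by
  have := Finite.of_injective f hf
  have hindex : ¬p ∣ (P.map f).index := by
    rw [Subgroup.index_map_of_injective _ hf]
    exact (Fact.out : p.Prime).not_dvd_mul P.not_dvd_index hp
  exact ⟨((P : Subgroup G).equivMapOfInjective f hf).trans
    (((P.isPGroup'.map f).toSylow hindex).equiv Q)⟩

theorem isPGroup_prod {p : ℕ} {G H : Type*} [Group G] [Group H] (hG : IsPGroup p G)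
    (hH : IsPGroup p H) : IsPGroup p (G × H) := by
  rintro ⟨g, h⟩
  obtain ⟨a, ha⟩ := hG g
  obtain ⟨b, hb⟩ := hH h
  exact ⟨a + b, Prod.ext (by simp [pow_add, pow_mul, ha]) (by simp [pow_add, pow_mul', hb])⟩

theorem nonempty_sylow_prod_mulEquiv {p : ℕ} [Fact p.Prime] {G H : Type*} [Group G] [Group H]
    [Finite G] [Finite H] (P : Sylow p G) (Q : Sylow p H) (R : Sylow p (G × H)) :
    Nonempty (R ≃* P × Q) := by
  let e : ↥((P : Subgroup G).prod (Q : Subgroup H)) ≃* P × Q := Subgroup.prodEquiv _ _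
  have hindex : ¬p ∣ ((P : Subgroup G).prod (Q : Subgroup H)).index := by
    rw [Subgroup.index_prod]
    exact (Fact.out : p.Prime).not_dvd_mul P.not_dvd_index Q.not_dvd_index
  have hpgroup := (isPGroup_prod P.isPGroup' Q.isPGroup').of_equiv e.symm
  exact ⟨(R.equiv (hpgroup.toSylow hindex)).trans e⟩

variable (α β : Type*) [Finite α] [Finite β]

theorem index_range_sumCongrHom :
    (Equiv.Perm.sumCongrHom α β).range.index = (Nat.card α + Nat.card β).choose (Nat.card α) := by
  have h := (Equiv.Perm.sumCongrHom α β).range.index_mul_card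
  rw [← Nat.card_congr (MonoidHom.ofInjective Equiv.Perm.sumCongrHom_injective).toEquiv,
    Nat.card_prod, Nat.card_perm, Nat.card_perm, Nat.card_perm, Nat.card_sum,
    ← Nat.add_choose_mul_factorial_mul_factorial, mul_assoc, ← Nat.choose_symm_add] at h
  exact Nat.eq_of_mul_eq_mul_right
    (Nat.mul_pos (Nat.factorial_pos _) (Nat.factorial_pos _)) h

variable {α β}

theorem index_commutator_sylow_perm_sum {p : ℕ} [Fact p.Prime]
    (h : ¬p ∣ (Nat.card α + Nat.card β).choose (Nat.card α)) (P : Sylow p (Equiv.Perm α))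
    (Q : Sylow p (Equiv.Perm β)) (R : Sylow p (Equiv.Perm (α ⊕ β))) :
    (commutator R).index = (commutator P).index * (commutator Q).index := by
  have S : Sylow p (Equiv.Perm α × Equiv.Perm β) := default
  obtain ⟨e⟩ := nonempty_sylow_mulEquiv_of_injective Equiv.Perm.sumCongrHom_injective
    (by rwa [index_range_sumCongrHom]) S R
  obtain ⟨e'⟩ := nonempty_sylow_prod_mulEquiv P Q S
  rw [← index_commutator_congr e, index_commutator_congr e', index_commutator_prod]

theorem index_commutator_sylow_perm_of_card_eq_prime_pow {p : ℕ} [Fact p.Prime] {a : ℕ}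
    (hα : Nat.card α = p ^ a) (P : Sylow p (Equiv.Perm α)) :
    (commutator P).index = p ^ a := by
  have e := Sylow.mulEquivIteratedWreathProduct p a α hα (Multiplicative (ZMod p)) (by simp) P
  rw [index_commutator_congr e, index_commutator_iteratedWreathProduct]
  simp

theorem index_commutator_sylow_perm_fin (n : ℕ) (P : Sylow 2 (Equiv.Perm (Fin n))) :
    (commutator P).index = twoPowProd n := by
  induction n using top_bit_induction with
  | zero => simp [twoPowProd]
  | two_pow_add a m hm ih =>
    have hchoose : ¬2 ∣ (Nat.card (Fin (2 ^ a)) + Nat.card (Fin m)).choose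
        (Nat.card (Fin (2 ^ a))) := by
      have h := choose_prime_pow_add_modEq_one hm
      rw [Nat.card_fin, Nat.card_fin, ← Int.natCast_dvd_natCast, h.dvd_iff]
      decide
    have Q : Sylow 2 (Equiv.Perm (Fin (2 ^ a))) := default
    have Q' : Sylow 2 (Equiv.Perm (Fin m)) := default
    have R : Sylow 2 (Equiv.Perm (Fin (2 ^ a) ⊕ Fin m)) := default
    let f : Equiv.Perm (Fin (2 ^ a) ⊕ Fin m) ≃* Equiv.Perm (Fin (2 ^ a + m)) :=
      finSumFinEquiv.permCongrHom
    obtain ⟨e⟩ := nonempty_sylow_mulEquiv_of_injective (f := f.toMonoidHom) f.injective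
      (by simp) R P
    rw [← index_commutator_congr e, index_commutator_sylow_perm_sum hchoose Q Q',
      index_commutator_sylow_perm_of_card_eq_prime_pow (Nat.card_fin _), ih,
      twoPowProd_two_pow_add hm]

end SylowSymmetric

section CauchyDeterminant

open Finset Matrix

variable {R : Type*} [CommRing R]

theorem prod_sub_mul_eq_sum_esymm {ι : Type*} (s : Finset ι) (b : ι → R) (v w : R) :
    ∏ k ∈ s, (w - v * b k) =
      ∑ m ∈ range (#s + 1), v ^ m * w ^ (#s - m) * (s.val.map (-b ·)).esymm m := by
  classical
  simp only [sub_eq_neg_add, ← mul_neg]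
  rw [prod_add, sum_powerset]
  refine sum_congr rfl fun m _ => ?_
  rw [esymm_map_val, mul_sum]
  refine sum_congr rfl fun t ht => ?_
  rw [mem_powersetCard] at ht
  rw [prod_mul_distrib, prod_const, prod_const, card_sdiff_of_subset ht.1, ht.2]
  ring

theorem one_sub_X_mul_C_mul_rescale (c : R) :
    (1 - PowerSeries.X * PowerSeries.C c) * PowerSeries.rescale c (PowerSeries.mk 1) = 1 := by
  have h := congrArg (PowerSeries.rescale c) (PowerSeries.mk_one_mul_one_sub_eq_one R)
  rwa [map_mul, map_sub, map_one, PowerSeries.rescale_X, mul_comm, mul_comm (PowerSeries.C c)] at h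

variable {L : ℕ}

theorem projVandermonde_mul_esymm (v w b : Fin L → R) :
    projVandermonde v w * (of fun m j : Fin L => ((univ.erase j).val.map (-b ·)).esymm m) =
      of fun i j => ∏ k ∈ univ.erase j, (w i - v i * b k) := by
  ext i j
  rw [mul_apply, of_apply, prod_sub_mul_eq_sum_esymm, card_erase_of_mem (mem_univ j), card_fin,
    Nat.sub_add_cancel j.pos, sum_range]
  refine sum_congr rfl fun m _ => ?_
  rw [projVandermonde_apply, of_apply, Fin.val_rev, Nat.sub_sub, add_comm]

theorem prod_prod_erase_sub (b : Fin L → R) :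
    ∏ i, ∏ k ∈ univ.erase i, (b i - b k) =
      (∏ i, ∏ j ∈ Ioi i, (b i - b j)) * ∏ i, ∏ j ∈ Ioi i, (b j - b i) := by
  have hsplit (i : Fin L) : univ.erase i = (Ioi i).disjUnion (Iio i)
      (disjoint_left.mpr fun k hk => by simpa using (mem_Ioi.mp hk).le) := by
    ext k
    simp [eq_comm (a := k)]
  simp only [hsplit, prod_disjUnion, prod_mul_distrib]
  congr 1
  exact prod_comm' (by simp)

variable [IsDomain R]

theorem det_esymm_erase {b : Fin L → R} (hb : Function.Injective b) :
    (of fun m j : Fin L => ((univ.erase j).val.map (-b ·)).esymm m).det =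
      (vandermonde b).det := by
  have hdiag : (of fun i j => ∏ k ∈ univ.erase j, (b i - 1 * b k)) =
      diagonal fun i => ∏ k ∈ univ.erase i, (b i - b k) := by
    ext i j
    rcases eq_or_ne i j with rfl | hij
    · simp
    · rw [diagonal_apply_ne _ hij, of_apply]
      exact prod_eq_zero (mem_erase.mpr ⟨hij, mem_univ _⟩) (by ring)
  have hne : ∏ i, ∏ j ∈ Ioi i, (b i - b j) ≠ 0 :=
    prod_ne_zero_iff.mpr fun i _ => prod_ne_zero_iff.mpr fun j hj =>
      sub_ne_zero.mpr (hb.ne (mem_Ioi.mp hj).ne)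
  have h := congrArg det (projVandermonde_mul_esymm (fun _ => 1) b b)
  rw [det_mul, det_projVandermonde, hdiag, det_diagonal, prod_prod_erase_sub,
    ← det_vandermonde] at h
  exact mul_left_cancel₀ hne (by simpa using h)

/-- Cauchy's determinant. The equations `hg` say `g i j = 1 / (1 - a i * b j)` without division, so
that `R` may be a ring of power series. -/
theorem det_of_one_sub_mul_mul_eq_one {a b : Fin L → R} {g : Matrix (Fin L) (Fin L) R}
    (hb : Function.Injective b) (hg : ∀ i j, (1 - a i * b j) * g i j = 1) :
    g.det = (vandermonde a).det * (vandermonde b).det * ∏ i, ∏ j, g i j := by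
  have hdet := congrArg det (projVandermonde_mul_esymm a (fun _ => 1) b)
  rw [det_mul, det_esymm_erase hb, show (fun _ => 1 : Fin L → R) = 1 from rfl,
    ← vandermonde_eq_projVandermonde] at hdet
  have hclear : (of fun i j => ∏ k ∈ univ.erase j, (1 - a i * b k)) =
      of fun i j => (∏ k, (1 - a i * b k)) * g i j := by
    ext i j
    rw [of_apply, of_apply, ← mul_prod_erase univ _ (mem_univ j), mul_right_comm, hg, one_mul]
  have hinv : (∏ i, ∏ j, (1 - a i * b j)) * ∏ i, ∏ j, g i j = 1 := by
    simp only [← prod_mul_distrib, hg, prod_const_one]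
  rw [hdet.trans (congrArg det hclear), det_mul_column, mul_right_comm, hinv, one_mul]

theorem det_rescale_mk_one (x : Fin L → R) {y : Fin L → R} (hy : Function.Injective y) :
    (of fun i j => PowerSeries.rescale (x i * y j) (PowerSeries.mk 1 : PowerSeries R)).det =
      PowerSeries.X ^ (∑ j : Fin L, (j : ℕ)) *
        (PowerSeries.C ((vandermonde x).det * (vandermonde y).det) *
          ∏ p : Fin L × Fin L, PowerSeries.rescale (x p.1 * y p.2) (PowerSeries.mk 1)) := by
  have hx : (vandermonde fun i => PowerSeries.X * PowerSeries.C (x i)).det =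
      PowerSeries.X ^ (∑ j : Fin L, (j : ℕ)) * PowerSeries.C (vandermonde x).det := by
    have : (vandermonde fun i => PowerSeries.X * PowerSeries.C (x i)) =
        of fun i j : Fin L => PowerSeries.X ^ (j : ℕ) *
          (PowerSeries.C (R := R)).mapMatrix (vandermonde x) i j := by
      ext1 i j
      simp [mul_pow]
    rw [this, det_mul_row, prod_pow_eq_pow_sum, RingHom.map_det]
  have hy' : (vandermonde fun i => PowerSeries.C (y i)).det =
      PowerSeries.C (vandermonde y).det := by
    rw [RingHom.map_det]
    congr 1
    ext1 i j
    simp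
  rw [det_of_one_sub_mul_mul_eq_one (a := fun i => PowerSeries.X * PowerSeries.C (x i))
    (PowerSeries.C_injective.comp hy) fun i j => ?_]
  · simp only [Function.comp_def, hx, hy', map_mul, Fintype.prod_prod_type, of_apply]
    ring
  · rw [Function.comp_apply, mul_assoc, ← map_mul, of_apply, one_sub_X_mul_C_mul_rescale]

theorem cauchy_identity (x : Fin L → R) {y : Fin L → R} (hy : Function.Injective y) (n : ℕ) :
    (vandermonde x).det * (vandermonde y).det *
        ∑ d ∈ finsuppAntidiag (univ : Finset (Fin L × Fin L)) n, ∏ p, (x p.1 * y p.2) ^ d p =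
      ∑ w : Equiv.Perm (Fin L), ((w.sign : ℤ) : R) *
        ∑ l ∈ finsuppAntidiag (univ : Finset (Fin L)) (n + ∑ j : Fin L, (j : ℕ)),
          ∏ i, (x (w i) * y i) ^ l i := by
  have h := congrArg (PowerSeries.coeff (n + ∑ j : Fin L, (j : ℕ))) (det_rescale_mk_one x hy)
  rw [PowerSeries.coeff_X_pow_mul, PowerSeries.coeff_C_mul, PowerSeries.coeff_prod] at h
  simp only [PowerSeries.coeff_rescale, PowerSeries.coeff_mk, Pi.one_apply, mul_one] at h
  rw [← h, det_apply', map_sum]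
  refine sum_congr rfl fun w _ => ?_
  rw [← map_intCast (PowerSeries.C (R := R)), PowerSeries.coeff_C_mul, PowerSeries.coeff_prod]
  simp

end CauchyDeterminant

section Colorings

open Finset MvPolynomial

theorem sum_card_fixedBy_of_isPretransitive (G X : Type*) [Group G] [Fintype G] [MulAction G X]
    [Finite X] [Nonempty X] [MulAction.IsPretransitive G X] :
    ∑ g : G, Nat.card (MulAction.fixedBy X g) = Nat.card G := by
  classical
  have := Fintype.ofFinite X
  obtain ⟨_⟩ := (MulAction.pretransitive_iff_unique_quotient_of_nonempty G X).mp inferInstance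
  simpa using MulAction.sum_card_fixedBy_eq_card_orbits_mul_card_group G X

theorem comp_symm_eq_self_iff {ι Λ : Type*} {h : ι → Λ} {σ : Equiv.Perm ι} :
    h ∘ σ.symm = h ↔ h ∘ σ = h := by
  rw [Equiv.comp_symm_eq, eq_comm]

variable {ι Λ : Type*} [Fintype ι]

/-- The content of a colouring `h`: the number of times each colour is used. -/
def coloringContent (h : ι → Λ) : Λ →₀ ℕ :=
  ∑ k, Finsupp.single (h k) 1

theorem prod_X_eq_monomial_coloringContent (h : ι → Λ) :
    ∏ k, (X (h k) : MvPolynomial Λ ℤ) = monomial (coloringContent h) 1 := by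
  rw [coloringContent, monomial_sum_one]
  rfl

theorem coloringContent_apply (h : ι → Λ) (i : Λ) :
    coloringContent h i = Nat.card {k // h k = i} := by
  classical
  simp [coloringContent, Finsupp.finsetSum_apply, Finsupp.single_apply, Fintype.card_subtype]

theorem coloringContent_comp_perm (h : ι → Λ) (σ : Equiv.Perm ι) :
    coloringContent (h ∘ σ) = coloringContent h :=
  Equiv.sum_comp σ fun k => Finsupp.single (h k) 1

theorem exists_perm_comp_eq_of_coloringContent_eq {h h' : ι → Λ}
    (hh' : coloringContent h = coloringContent h') : ∃ σ : Equiv.Perm ι, h' ∘ σ = h := by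
  have hcard (i : Λ) : Nat.card {k // h k = i} = Nat.card {k // h' k = i} := by
    rw [← coloringContent_apply, ← coloringContent_apply, hh']
  let e (i : Λ) : {k // h k = i} ≃ {k // h' k = i} := (Finite.card_eq.mp (hcard i)).some
  exact ⟨Equiv.ofFiberEquiv e, funext fun k => Equiv.ofFiberEquiv_map e k⟩

theorem sum_coloringContent [Fintype Λ] (h : ι → Λ) :
    ∑ i, coloringContent h i = Fintype.card ι := by
  simp only [coloringContent, Finsupp.finsetSum_apply]
  rw [sum_comm]
  simp

theorem exists_coloringContent_eq [Fintype Λ] {d : Λ →₀ ℕ} (hd : ∑ i, d i = Fintype.card ι) :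
    ∃ h : ι → Λ, coloringContent h = d := by
  let e : ι ≃ Σ i, Fin (d i) := Fintype.equivOfCardEq (by simp [hd])
  refine ⟨fun k => (e k).1, Finsupp.ext fun i => ?_⟩
  let e' : {k // (e k).1 = i} ≃ Fin (d i) :=
    (e.subtypeEquiv fun _ => Iff.rfl).trans (Equiv.sigmaSubtype i)
  rw [coloringContent_apply, Nat.card_congr e', Nat.card_fin]

variable (ι) in
/-- The colourings of `ι` with content `d`. The group `Equiv.Perm ι` acts on them by permuting
the points; this permutation representation is induced from the Young subgroup of shape `d`. -/
def ColoringOfContent (d : Λ →₀ ℕ) : Type _ :=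
  {h : ι → Λ // coloringContent h = d}

instance (d : Λ →₀ ℕ) : MulAction (Equiv.Perm ι) (ColoringOfContent ι d) where
  smul σ h := ⟨h.1 ∘ σ.symm, (coloringContent_comp_perm _ _).trans h.2⟩
  one_smul _ := rfl
  mul_smul _ _ _ := rfl

instance [Finite Λ] (d : Λ →₀ ℕ) : Finite (ColoringOfContent ι d) :=
  inferInstanceAs (Finite {h : ι → Λ // coloringContent h = d})

instance (d : Λ →₀ ℕ) : MulAction.IsPretransitive (Equiv.Perm ι) (ColoringOfContent ι d) where
  exists_smul_eq h h' := by
    obtain ⟨σ, hσ⟩ := exists_perm_comp_eq_of_coloringContent_eq (h.2.trans h'.2.symm)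
    exact ⟨σ, Subtype.ext ((Equiv.comp_symm_eq _ _ _).mpr hσ.symm)⟩

variable [DecidableEq ι] [Fintype Λ] [DecidableEq Λ]

variable (Λ) in
/-- The generating polynomial of the colourings that are constant on the cycles of `σ`. It is the
power sum symmetric polynomial `p_λ`, where `λ` is the cycle type of `σ` (with fixed points). -/
def coloringPoly (σ : Equiv.Perm ι) : MvPolynomial Λ ℤ :=
  ∑ h : ι → Λ with h ∘ σ = h, ∏ k, X (h k)

theorem coeff_coloringPoly (σ : Equiv.Perm ι) (d : Λ →₀ ℕ) :
    (coloringPoly Λ σ).coeff d =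
      Nat.card (MulAction.fixedBy (ColoringOfContent ι d) σ) := by
  let e : {h : ι → Λ // h ∘ σ = h ∧ coloringContent h = d} ≃
      MulAction.fixedBy (ColoringOfContent ι d) σ :=
    { toFun := fun h => ⟨⟨h.1, h.2.2⟩, Subtype.ext (comp_symm_eq_self_iff.mpr h.2.1)⟩
      invFun := fun h => ⟨h.1.1, comp_symm_eq_self_iff.mp (congrArg Subtype.val h.2), h.1.2⟩
      left_inv := fun _ => rfl
      right_inv := fun _ => rfl }
  rw [← Nat.card_congr e, Nat.card_eq_fintype_card, Fintype.card_subtype]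
  simp only [coloringPoly, prod_X_eq_monomial_coloringContent, coeff_sum, coeff_monomial,
    sum_boole, filter_filter]

theorem sum_coloringPoly :
    ∑ σ : Equiv.Perm ι, coloringPoly Λ σ = ((Fintype.card ι).factorial : MvPolynomial Λ ℤ) *
      ∑ d ∈ finsuppAntidiag univ (Fintype.card ι), monomial d 1 := by
  ext d
  rw [coeff_sum, ← map_natCast C, coeff_C_mul, coeff_sum]
  simp only [coeff_coloringPoly, coeff_monomial, sum_ite_eq', mem_finsuppAntidiag, subset_univ,
    and_true]
  split_ifs with hd
  · obtain ⟨h, hh⟩ := exists_coloringContent_eq hd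
    have : Nonempty (ColoringOfContent ι d) := ⟨⟨h, hh⟩⟩
    rw [← Nat.cast_sum, sum_card_fixedBy_of_isPretransitive, Nat.card_perm,
      Nat.card_eq_fintype_card, mul_one, Int.natCast_inj]
  · have : IsEmpty (ColoringOfContent ι d) := ⟨fun h => hd (h.2 ▸ sum_coloringContent h.1)⟩
    simp

end Colorings

section FrobeniusCharacters

open Finset MvPolynomial

theorem map_coloringPoly_mul_map_coloringPoly {ι Λ Λ' R : Type*} [Fintype ι] [DecidableEq ι]
    [Fintype Λ] [DecidableEq Λ] [Fintype Λ'] [DecidableEq Λ'] [CommRing R]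
    (f : MvPolynomial Λ ℤ →+* R) (g : MvPolynomial Λ' ℤ →+* R) (σ : Equiv.Perm ι) :
    f (coloringPoly Λ σ) * g (coloringPoly Λ' σ) =
      aeval (fun p : Λ × Λ' => f (X p.1) * g (X p.2)) (coloringPoly (Λ × Λ') σ) := by
  simp only [coloringPoly, map_sum, map_prod, aeval_X]
  rw [sum_mul_sum, ← sum_product']
  refine (sum_equiv (Equiv.arrowProdEquivProdArrow ι (fun _ => Λ) fun _ => Λ') (fun h => ?_)
    fun h _ => prod_mul_distrib).symm
  simp [funext_iff, Prod.ext_iff, forall_and]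

theorem map_monomial_one {Λ R F : Type*} [Fintype Λ] [CommRing R]
    [FunLike F (MvPolynomial Λ ℤ) R] [RingHomClass F (MvPolynomial Λ ℤ) R] (f : F) (d : Λ →₀ ℕ) :
    f (monomial d 1) = ∏ i, f (X i) ^ d i := by
  rw [monomial_eq, map_one, one_mul, Finsupp.prod_fintype _ _ fun _ => pow_zero _, map_prod]
  simp only [map_pow]

variable {L : ℕ}

theorem coeff_coeff_map_C_mul_C (p q : MvPolynomial (Fin L) ℤ) (α β : Fin L →₀ ℕ) :
    ((map C p * C q : MvPolynomial (Fin L) (MvPolynomial (Fin L) ℤ)).coeff α).coeff β =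
      p.coeff α * q.coeff β := by
  rw [mul_comm, coeff_C_mul, coeff_map, mul_comm, coeff_C_mul]

variable (L) in
/-- The Vandermonde determinant in `L` variables, as a polynomial. -/
def vandermondePoly : MvPolynomial (Fin L) ℤ :=
  (Matrix.vandermonde X).det

theorem map_vandermondePoly {R : Type*} [CommRing R] (f : MvPolynomial (Fin L) ℤ →+* R) :
    f (vandermondePoly L) = (Matrix.vandermonde fun i => f (X i)).det := by
  rw [vandermondePoly, RingHom.map_det]
  congr 1
  ext i j
  simp [Matrix.vandermonde_apply]

variable {ι : Type*} [Fintype ι] [DecidableEq ι]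

/-- The value at `σ` of the virtual character attached to `α` by Frobenius' formula. If `α` has
distinct entries and degree `card ι + (0 + 1 + ⋯ + (L - 1))`, then it is up to sign the irreducible
character of the partition obtained by sorting `α` and subtracting the staircase. -/
def frobeniusCharacter (α : Fin L →₀ ℕ) (σ : Equiv.Perm ι) : ℤ :=
  (vandermondePoly L * coloringPoly (Fin L) σ).coeff α

theorem sum_map_vandermondePoly_mul_coloringPoly_mul {R : Type*} [CommRing R] [IsDomain R]
    (f : MvPolynomial (Fin L) ℤ →+* R) {g : MvPolynomial (Fin L) ℤ →+* R}
    (hg : Function.Injective fun i => g (X i)) :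
    ∑ σ : Equiv.Perm ι, f (vandermondePoly L * coloringPoly (Fin L) σ) *
        g (vandermondePoly L * coloringPoly (Fin L) σ) =
      ((Fintype.card ι).factorial : R) * ∑ w : Equiv.Perm (Fin L), ((w.sign : ℤ) : R) *
        ∑ l ∈ finsuppAntidiag univ (Fintype.card ι + ∑ j : Fin L, (j : ℕ)),
          f (monomial (l.mapDomain w) 1) * g (monomial l 1) := by
  have hterm (σ : Equiv.Perm ι) : f (vandermondePoly L * coloringPoly (Fin L) σ) *
      g (vandermondePoly L * coloringPoly (Fin L) σ) =
        (Matrix.vandermonde fun i => f (X i)).det * (Matrix.vandermonde fun i => g (X i)).det *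
          aeval (fun p : Fin L × Fin L => f (X p.1) * g (X p.2))
            (coloringPoly (Fin L × Fin L) σ) := by
    rw [map_mul, map_mul, map_vandermondePoly, map_vandermondePoly, mul_mul_mul_comm,
      map_coloringPoly_mul_map_coloringPoly]
  have hpair (w : Equiv.Perm (Fin L)) (l : Fin L →₀ ℕ) :
      f (monomial (l.mapDomain w) 1) * g (monomial l 1) =
        ∏ i, (f (X (w i)) * g (X i)) ^ l i := by
    rw [map_monomial_one, map_monomial_one, ← Equiv.prod_comp w, ← prod_mul_distrib]
    simp [mul_pow]
  simp only [hpair, hterm]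
  rw [← mul_sum, ← map_sum, sum_coloringPoly, map_mul, map_natCast, map_sum, mul_left_comm,
    ← cauchy_identity (fun i => f (X i)) hg]
  simp only [map_monomial_one, aeval_X]

theorem sum_frobeniusCharacter_mul (α : Fin L →₀ ℕ) {β : Fin L →₀ ℕ}
    (hβ : β.degree = Fintype.card ι + ∑ j : Fin L, (j : ℕ)) :
    ∑ σ : Equiv.Perm ι, frobeniusCharacter α σ * frobeniusCharacter β σ =
      ((Fintype.card ι).factorial : ℤ) *
        ∑ w : Equiv.Perm (Fin L), if β.mapDomain w = α then (w.sign : ℤ) else 0 := by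
  have hinj : Function.Injective
      fun i : Fin L => (C (X i) : MvPolynomial (Fin L) (MvPolynomial (Fin L) ℤ)) :=
    (C_injective _ _).comp X_injective
  have hβ' : β ∈ finsuppAntidiag univ (Fintype.card ι + ∑ j : Fin L, (j : ℕ)) :=
    mem_finsuppAntidiag.mpr ⟨(Finsupp.degree_eq_sum β).symm.trans hβ, subset_univ _⟩
  have hcoeff := congrArg (fun p => (p.coeff α).coeff β)
    (sum_map_vandermondePoly_mul_coloringPoly_mul (ι := ι) (map C) hinj)
  simp only [← map_natCast (C : MvPolynomial (Fin L) ℤ →+* _), ← map_natCast (C : ℤ →+* _),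
    ← map_intCast (C : MvPolynomial (Fin L) ℤ →+* _), ← map_intCast (C : ℤ →+* _),
    coeff_sum, coeff_C_mul, coeff_coeff_map_C_mul_C, coeff_monomial] at hcoeff
  simp only [frobeniusCharacter, hcoeff, mul_ite, mul_one, mul_zero, sum_ite_eq', hβ', if_true,
    Int.cast_id]

theorem coloringPoly_inv (Λ : Type*) [Fintype Λ] [DecidableEq Λ] (σ : Equiv.Perm ι) :
    coloringPoly Λ σ⁻¹ = coloringPoly Λ σ := by
  simp only [coloringPoly, Equiv.Perm.inv_def, comp_symm_eq_self_iff]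

theorem charForm_frobeniusCharacter {ι : Type} [Fintype ι] [DecidableEq ι] (α : Fin L →₀ ℕ)
    {β : Fin L →₀ ℕ} (hβ : β.degree = Fintype.card ι + ∑ j : Fin L, (j : ℕ)) :
    charForm (Equiv.Perm ι) (fun σ => frobeniusCharacter α σ) (fun σ => frobeniusCharacter β σ) =
      ((∑ w : Equiv.Perm (Fin L), if β.mapDomain w = α then (w.sign : ℤ) else 0 : ℤ) : ℂ) := by
  have hinv (σ : Equiv.Perm ι) : frobeniusCharacter β σ⁻¹ = frobeniusCharacter β σ := by
    rw [frobeniusCharacter, coloringPoly_inv, frobeniusCharacter]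
  rw [charForm_apply, inv_mul_eq_iff_eq_mul₀ (by simp), Nat.card_perm, Nat.card_eq_fintype_card]
  simp only [hinv]
  exact_mod_cast sum_frobeniusCharacter_mul α hβ

theorem frobeniusCharacter_mem_virtualCharacter {ι : Type} [Fintype ι] [DecidableEq ι]
    (α : Fin L →₀ ℕ) :
    (fun σ => (frobeniusCharacter α σ : ℂ)) ∈ VirtualCharacter (Equiv.Perm ι) := by
  have hsum : (fun σ : Equiv.Perm ι => (frobeniusCharacter α σ : ℂ)) =
      ∑ γ ∈ antidiagonal α, (vandermondePoly L).coeff γ.1 • fun σ : Equiv.Perm ι =>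
        (Nat.card (MulAction.fixedBy (ColoringOfContent ι γ.2) σ) : ℂ) := by
    funext σ
    rw [frobeniusCharacter, coeff_mul]
    simp [coeff_coloringPoly]
  rw [hsum]
  exact sum_mem fun γ _ => zsmul_mem (card_fixedBy_mem_virtualCharacter _) _

end FrobeniusCharacters

section AlternatingPolynomials

open Finset MvPolynomial

theorem mapDomain_perm_injective {Λ : Type*} {α : Λ →₀ ℕ}
    (hα : Function.Injective α) :
    Function.Injective fun w : Equiv.Perm Λ => α.mapDomain w := by
  intro w w' h
  refine Equiv.symm_bijective.injective (Equiv.ext fun k => hα ?_)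
  rw [← Finsupp.mapDomain_equiv_apply, ← Finsupp.mapDomain_equiv_apply]
  exact congrArg (· k) h

variable {Λ R : Type*} [DecidableEq Λ] [CommRing R]

/-- A polynomial is alternating if exchanging two distinct variables changes its sign. -/
def IsAlternatingPoly (F : MvPolynomial Λ R) : Prop :=
  ∀ i j, i ≠ j → rename (Equiv.swap i j) F = -F

theorem IsAlternatingPoly.mul_isSymmetric {F G : MvPolynomial Λ R} (hF : IsAlternatingPoly F)
    (hG : G.IsSymmetric) : IsAlternatingPoly (F * G) := fun i j hij => by
  rw [map_mul, hF i j hij, hG, neg_mul]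

theorem IsAlternatingPoly.injective_of_coeff_ne_zero [NoZeroDivisors R] [CharZero R]
    {F : MvPolynomial Λ R} (hF : IsAlternatingPoly F) {α : Λ →₀ ℕ} (hα : F.coeff α ≠ 0) :
    Function.Injective α := by
  intro i j hij
  by_contra hne
  have hswap : α.mapDomain (Equiv.swap i j) = α := by
    ext k
    rw [Finsupp.mapDomain_equiv_apply, Equiv.symm_swap, Equiv.swap_apply_def]
    split_ifs with hi hj <;> simp [*]
  have hcoeff := coeff_rename_mapDomain (Equiv.swap i j) (Equiv.injective _) F α
  rw [hswap, hF i j hne, coeff_neg] at hcoeff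
  exact hα (self_eq_neg.mp hcoeff.symm)

variable {L : ℕ}

variable (L) in
/-- The exponent vector `(0, 1, …, L - 1)`, whose rearrangements are the exponents of the monomials
of the Vandermonde determinant. -/
def staircase : Fin L →₀ ℕ :=
  Finsupp.equivFunOnFinite.symm fun i => i

theorem injective_staircase : Function.Injective (staircase L) :=
  Fin.val_injective

theorem vandermondePoly_eq_sum : vandermondePoly L = ∑ w : Equiv.Perm (Fin L),
    monomial ((staircase L).mapDomain w) (w.sign : ℤ) := by
  rw [vandermondePoly, Matrix.det_apply']
  refine sum_congr rfl fun w _ => ?_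
  rw [← mul_one (w.sign : ℤ), ← C_mul_monomial, ← rename_monomial, map_monomial_one]
  simp [Matrix.vandermonde_apply, staircase]

theorem coeff_vandermondePoly_mapDomain_staircase (w : Equiv.Perm (Fin L)) :
    (vandermondePoly L).coeff ((staircase L).mapDomain w) = w.sign := by
  simp [vandermondePoly_eq_sum, coeff_sum, coeff_monomial,
    (mapDomain_perm_injective injective_staircase).eq_iff]

theorem exists_mapDomain_staircase_eq_of_coeff_ne_zero {α : Fin L →₀ ℕ}
    (hα : (vandermondePoly L).coeff α ≠ 0) :
    ∃ w : Equiv.Perm (Fin L), (staircase L).mapDomain w = α := by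
  rw [vandermondePoly_eq_sum, coeff_sum] at hα
  obtain ⟨w, -, hw⟩ := exists_ne_zero_of_sum_ne_zero hα
  exact ⟨w, by_contra fun hne => hw (by rw [coeff_monomial, if_neg hne])⟩

theorem factorial_le_card_support_vandermondePoly :
    L.factorial ≤ (vandermondePoly L).support.card := by
  have himage : univ.image (fun w : Equiv.Perm (Fin L) => (staircase L).mapDomain w) ⊆
      (vandermondePoly L).support := by
    rintro _ hα
    obtain ⟨w, -, rfl⟩ := mem_image.mp hα
    simp [coeff_vandermondePoly_mapDomain_staircase]
  have hcard := card_le_card himage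
  rwa [card_image_of_injective _ (mapDomain_perm_injective injective_staircase), card_univ,
    Fintype.card_perm, Fintype.card_fin] at hcard

/-- A polynomial in `L` variables that looks like `∑ ±a_α`, a sum without cancellation of monomial
alternants `a_α` of degree `m + (0 + 1 + ⋯ + (L - 1))` with unit coefficients. -/
structure IsUnitAlternant (m : ℕ) (F : MvPolynomial (Fin L) R) : Prop where
  isAlternatingPoly : IsAlternatingPoly F
  isHomogeneous : F.IsHomogeneous (m + ∑ j : Fin L, (j : ℕ))
  isUnit_coeff : ∀ α, F.coeff α ≠ 0 → IsUnit (F.coeff α)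

theorem isUnitAlternant_vandermondePoly : IsUnitAlternant 0 (vandermondePoly L) where
  isAlternatingPoly i j hij := by
    have hswap : (rename (Equiv.swap i j)).mapMatrix
        (Matrix.vandermonde (X : Fin L → MvPolynomial (Fin L) ℤ)) =
          (Matrix.vandermonde X).submatrix (Equiv.swap i j) id := by
      ext1 a b
      simp [Matrix.vandermonde_apply]
    rw [vandermondePoly, AlgHom.map_det, hswap, Matrix.det_permute, Equiv.Perm.sign_swap hij]
    simp
  isHomogeneous := by
    rw [vandermondePoly_eq_sum]
    refine IsHomogeneous.sum _ _ _ fun w _ => isHomogeneous_monomial _ ?_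
    rw [Finsupp.degree_mapDomain, Finsupp.degree_eq_sum, zero_add]
    rfl
  isUnit_coeff α hα := by
    obtain ⟨w, rfl⟩ := exists_mapDomain_staircase_eq_of_coeff_ne_zero hα
    rw [coeff_vandermondePoly_mapDomain_staircase]
    exact Units.isUnit _

theorem sum_fin_val_le_sum_of_injective {f : Fin L → ℕ} (hf : Function.Injective f) :
    ∑ j : Fin L, (j : ℕ) ≤ ∑ j, f j := by
  have hinj : Function.Injective fun j => (f j : ℤ) := Nat.cast_injective.comp hf
  have hsum := sum_range_le_sum (s := univ.image fun j => (f j : ℤ)) (c := 0) (by simp)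
  rw [sum_image hinj.injOn, card_image_of_injective _ hinj, card_univ, Fintype.card_fin,
    Finset.sum_range] at hsum
  simpa only [zero_add, ← Nat.cast_sum, Nat.cast_le] using hsum

theorem injective_add_single {Λ : Type*} {β : Λ →₀ ℕ} (hβ : Function.Injective β) {i : Λ} {q : ℕ}
    (hi : ∀ l, β l ≠ β i + q) : Function.Injective ⇑(β + Finsupp.single i q) := by
  classical
  intro a b hab
  simp only [Finsupp.add_apply, Finsupp.single_apply] at hab
  grind [hβ.eq_iff]

/-- Removing hooks of length `q` at two different places would leave distinct exponents whose sum
is too small. -/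
theorem eq_of_add_single_eq_add_single {m q : ℕ} (hmq : m < q) {β β' : Fin L →₀ ℕ}
    (hβ : Function.Injective β) (hβ' : Function.Injective β')
    (hdeg : β.degree = m + ∑ j : Fin L, (j : ℕ)) {i i' : Fin L}
    (hα : Function.Injective ⇑(β + Finsupp.single i q))
    (heq : β + Finsupp.single i q = β' + Finsupp.single i' q) : i = i' := by
  by_contra hne
  have hβ_apply (l : Fin L) : β l + (if i = l then q else 0) = β' l + if i' = l then q else 0 := by
    simpa [Finsupp.single_apply] using DFunLike.congr_fun heq l
  have hle : q ≤ β i' := by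
    have := hβ_apply i'
    grind
  let γ : Fin L → ℕ := fun l => if i' = l then β l - q else β l
  have hγ : Function.Injective γ := by
    intro a b hab
    by_contra hab'
    have h1 := fun h => hab' (hα (a₁ := a) (a₂ := b) h)
    have h2 := fun h => hab' (hβ (a₁ := a) (a₂ := b) h)
    have h3 := fun h => hab' (hβ' (a₁ := a) (a₂ := b) h)
    have ha := hβ_apply a
    have hb := hβ_apply b
    simp only [Finsupp.add_apply, Finsupp.single_apply] at h1
    simp only [γ] at hab
    grind
  have hsum : ∑ l, γ l + q = ∑ l, β l := by
    rw [← sum_erase_add _ _ (mem_univ i'), ← sum_erase_add univ β (mem_univ i'), add_assoc]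
    congr 1
    · exact sum_congr rfl fun l hl => if_neg (ne_of_mem_erase hl).symm
    · simp only [γ, if_true, Nat.sub_add_cancel hle]
  rw [Finsupp.degree_eq_sum] at hdeg
  have := sum_fin_val_le_sum_of_injective hγ
  omega

theorem le_card_injective_add_single {m q : ℕ} (hL : m + q ≤ L) {β : Fin L →₀ ℕ}
    (hβ : Function.Injective β) (hdeg : β.degree = m + ∑ j : Fin L, (j : ℕ)) :
    q ≤ (univ.filter fun i : Fin L => Function.Injective ⇑(β + Finsupp.single i q)).card := by
  rw [Finsupp.degree_eq_sum] at hdeg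
  have hsmall (r : Fin q) : ∃ i, β i = r := by
    by_contra! hr
    have hcons : Function.Injective (Fin.cons (r : ℕ) β : Fin (L + 1) → ℕ) :=
      Fin.cons_injective_iff.mpr ⟨by rintro ⟨i, hi⟩; exact hr i hi, hβ⟩
    have := sum_fin_val_le_sum_of_injective hcons
    rw [Fin.sum_univ_castSucc, Fin.sum_univ_succ] at this
    simp only [Fin.val_castSucc, Fin.val_last, Fin.cons_zero, Fin.cons_succ] at this
    omega
  -- A hook can be added to the largest entry in each residue class modulo `q`.
  have hresidue (r : Fin q) : ∃ i, β i % q = r ∧ ∀ l, β l ≠ β i + q := by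
    obtain ⟨i₀, hi₀⟩ := hsmall r
    obtain ⟨i, hi, hmax⟩ := exists_max_image (univ.filter fun i => β i % q = r) β
      ⟨i₀, by simp [hi₀, Nat.mod_eq_of_lt r.2]⟩
    rw [mem_filter] at hi
    refine ⟨i, hi.2, fun l hl => ?_⟩
    have := hmax l (by simp [hl, hi.2])
    have := r.pos
    omega
  choose f hf_mod hf_ne using hresidue
  have hf : Function.Injective f := fun r r' h => Fin.ext (by rw [← hf_mod r, ← hf_mod r', h])
  have hcard := card_le_card_of_injOn f (s := univ)
    (t := univ.filter fun i : Fin L => Function.Injective ⇑(β + Finsupp.single i q))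
    (fun r _ => mem_filter.mpr ⟨mem_univ _, injective_add_single hβ (hf_ne r)⟩) hf.injOn
  simpa using hcard

theorem coeff_mul_psum (F : MvPolynomial (Fin L) R) (q : ℕ) (α : Fin L →₀ ℕ) :
    (F * psum (Fin L) R q).coeff α =
      ∑ i, if q ≤ α i then F.coeff (α - Finsupp.single i q) else 0 := by
  rw [psum, mul_sum, coeff_sum]
  refine sum_congr rfl fun i _ => ?_
  rw [X_pow_eq_monomial, coeff_mul_monomial']
  simp [Finsupp.single_le_iff]

theorem exists_add_single_of_coeff_mul_psum_ne_zero {F : MvPolynomial (Fin L) R} {q : ℕ}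
    {α : Fin L →₀ ℕ} (hα : (F * psum (Fin L) R q).coeff α ≠ 0) :
    ∃ β i, F.coeff β ≠ 0 ∧ β + Finsupp.single i q = α := by
  rw [coeff_mul_psum] at hα
  obtain ⟨i, -, hi⟩ := exists_ne_zero_of_sum_ne_zero hα
  rw [ne_eq, ite_eq_right_iff, Classical.not_imp] at hi
  exact ⟨α - Finsupp.single i q, i, hi.2, tsub_add_cancel_of_le (Finsupp.single_le_iff.mpr hi.1)⟩

variable [NoZeroDivisors R] [CharZero R]

namespace IsUnitAlternant

variable {F : MvPolynomial (Fin L) R} {m q : ℕ}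

theorem injective (hF : IsUnitAlternant m F) {β : Fin L →₀ ℕ} (hβ : F.coeff β ≠ 0) :
    Function.Injective β :=
  hF.isAlternatingPoly.injective_of_coeff_ne_zero hβ

omit [NoZeroDivisors R] [CharZero R] in
theorem degree_eq (hF : IsUnitAlternant m F) {β : Fin L →₀ ℕ} (hβ : F.coeff β ≠ 0) :
    β.degree = m + ∑ j : Fin L, (j : ℕ) :=
  not_imp_comm.mp hF.isHomogeneous.coeff_eq_zero hβ

theorem eq_of_add_single_eq (hF : IsUnitAlternant m F) (hmq : m < q) {β β' : Fin L →₀ ℕ}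
    (hβ : F.coeff β ≠ 0) (hβ' : F.coeff β' ≠ 0) {i i' : Fin L}
    (hα : Function.Injective ⇑(β + Finsupp.single i q))
    (heq : β + Finsupp.single i q = β' + Finsupp.single i' q) : i = i' :=
  eq_of_add_single_eq_add_single hmq (hF.injective hβ) (hF.injective hβ') (hF.degree_eq hβ) hα heq

theorem coeff_mul_psum_add_single (hF : IsUnitAlternant m F) (hmq : m < q) {β : Fin L →₀ ℕ}
    (hβ : F.coeff β ≠ 0) {i : Fin L} (hα : Function.Injective ⇑(β + Finsupp.single i q)) :
    (F * psum (Fin L) R q).coeff (β + Finsupp.single i q) = F.coeff β := by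
  rw [coeff_mul_psum, sum_eq_single i]
  · simp
  · intro k _ hk
    rw [ite_eq_right_iff]
    intro hle
    by_contra hcoeff
    exact hk (hF.eq_of_add_single_eq hmq hβ hcoeff hα
      (tsub_add_cancel_of_le (Finsupp.single_le_iff.mpr hle)).symm).symm
  · simp

theorem mul_psum (hF : IsUnitAlternant m F) (hmq : m < q) :
    IsUnitAlternant (m + q) (F * psum (Fin L) R q) := by
  have halt : IsAlternatingPoly (F * psum (Fin L) R q) :=
    hF.isAlternatingPoly.mul_isSymmetric (psum_isSymmetric _ _ _)
  refine ⟨halt, ?_, fun α hα => ?_⟩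
  · rw [add_right_comm]
    exact hF.isHomogeneous.mul (IsHomogeneous.sum _ _ _ fun i _ => isHomogeneous_X_pow i q)
  · obtain ⟨β, i, hβ, rfl⟩ := exists_add_single_of_coeff_mul_psum_ne_zero hα
    rw [hF.coeff_mul_psum_add_single hmq hβ (halt.injective_of_coeff_ne_zero hα)]
    exact hF.isUnit_coeff β hβ

theorem mul_card_support_le (hF : IsUnitAlternant m F) (hmq : m < q) (hL : m + q ≤ L) :
    q * F.support.card ≤ (F * psum (Fin L) R q).support.card := by
  let T : Finset (Σ _ : Fin L →₀ ℕ, Fin L) := F.support.sigma fun β =>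
    univ.filter fun i : Fin L => Function.Injective ⇑(β + Finsupp.single i q)
  have hT {p} (hp : p ∈ T) :
      F.coeff p.1 ≠ 0 ∧ Function.Injective ⇑(p.1 + Finsupp.single p.2 q) :=
    ⟨mem_support_iff.mp (mem_sigma.mp hp).1, (mem_filter.mp (mem_sigma.mp hp).2).2⟩
  calc q * F.support.card = ∑ _β ∈ F.support, q := by rw [sum_const, smul_eq_mul, mul_comm]
    _ ≤ T.card := by
      rw [card_sigma]
      refine sum_le_sum fun β hβ => ?_
      rw [mem_support_iff] at hβ
      exact le_card_injective_add_single hL (hF.injective hβ) (hF.degree_eq hβ)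
    _ ≤ (F * psum (Fin L) R q).support.card := by
      refine card_le_card_of_injOn (fun p => p.1 + Finsupp.single p.2 q) (fun p hp => ?_) ?_
      · obtain ⟨hcoeff, hinj⟩ := hT hp
        rwa [mem_coe, mem_support_iff, hF.coeff_mul_psum_add_single hmq hcoeff hinj]
      · rintro ⟨β, i⟩ hp ⟨β', i'⟩ hp' heq
        obtain rfl : i = i' :=
          hF.eq_of_add_single_eq hmq (hT hp).1 (hT hp').1 (hT hp).2 heq
        obtain rfl : β = β' := add_right_cancel (a := β) heq
        rfl

end IsUnitAlternant

/-- The power sum symmetric polynomial indexed by the powers of two in the binary expansion of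
`n`. -/
def binaryPsum (Λ : Type*) [Fintype Λ] (n : ℕ) : MvPolynomial Λ ℤ :=
  (n.bitIndices.map fun i => psum Λ ℤ (2 ^ i)).prod

theorem binaryPsum_two_pow_add (Λ : Type*) [Fintype Λ] {a m : ℕ} (hm : m < 2 ^ a) :
    binaryPsum Λ (2 ^ a + m) = binaryPsum Λ m * psum Λ ℤ (2 ^ a) := by
  simp [binaryPsum, bitIndices_two_pow_add hm]

theorem isUnitAlternant_vandermondePoly_mul_binaryPsum (n : ℕ) :
    IsUnitAlternant n (vandermondePoly L * binaryPsum (Fin L) n) := by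
  induction n using top_bit_induction with
  | zero => simpa [binaryPsum] using isUnitAlternant_vandermondePoly
  | two_pow_add a m hm ih =>
    rw [binaryPsum_two_pow_add _ hm, ← mul_assoc, add_comm]
    exact ih.mul_psum hm

theorem le_card_support_vandermondePoly_mul_binaryPsum {n : ℕ} (hL : n ≤ L) :
    twoPowProd n * L.factorial ≤ (vandermondePoly L * binaryPsum (Fin L) n).support.card := by
  induction n using top_bit_induction with
  | zero => simpa [binaryPsum, twoPowProd] using factorial_le_card_support_vandermondePoly
  | two_pow_add a m hm ih =>
    rw [binaryPsum_two_pow_add _ hm, ← mul_assoc, twoPowProd_two_pow_add hm, mul_assoc]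
    exact (Nat.mul_le_mul_left _ (ih (by omega))).trans
      ((isUnitAlternant_vandermondePoly_mul_binaryPsum m).mul_card_support_le hm (by omega))

end AlternatingPolynomials

section PowerSumPermutations

open Finset MvPolynomial

variable {ι κ Λ : Type*} [Fintype ι] [DecidableEq ι] [Fintype κ] [DecidableEq κ]

theorem cycleType_eq_of_injective {σ : Equiv.Perm ι} {τ : Equiv.Perm κ} {f : ι → κ}
    (hf : Function.Injective f) (hfσ : ∀ a, τ (f a) = f (σ a)) (hτ : ∀ b ∉ Set.range f, τ b = b) :
    τ.cycleType = σ.cycleType := by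
  classical
  suffices τ = σ.extendDomain (Equiv.ofInjective f hf) by
    rw [this, Equiv.Perm.cycleType_extendDomain]
  ext b
  by_cases hb : b ∈ Set.range f
  · obtain ⟨a, rfl⟩ := hb
    rw [hfσ]
    exact (Equiv.Perm.extendDomain_apply_image σ (Equiv.ofInjective f hf) a).symm
  · rw [Equiv.Perm.extendDomain_apply_not_subtype _ _ hb, hτ b hb]

theorem cycleType_permCongr (e : ι ≃ κ) (σ : Equiv.Perm ι) :
    (e.permCongr σ).cycleType = σ.cycleType :=
  cycleType_eq_of_injective e.injective (by simp [Equiv.permCongr_apply]) (by simp)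

theorem cycleType_sumCongr (σ : Equiv.Perm ι) (τ : Equiv.Perm κ) :
    (Equiv.Perm.sumCongr σ τ).cycleType = σ.cycleType + τ.cycleType := by
  have hdisjoint :
      Equiv.Perm.Disjoint (Equiv.Perm.sumCongr σ (1 : Equiv.Perm κ)) (Equiv.Perm.sumCongr 1 τ) := by
    rintro (i | k) <;> simp
  have hleft : (Equiv.Perm.sumCongr σ (1 : Equiv.Perm κ)).cycleType = σ.cycleType :=
    cycleType_eq_of_injective Sum.inl_injective (by simp) (by simp)
  have hright : (Equiv.Perm.sumCongr (1 : Equiv.Perm ι) τ).cycleType = τ.cycleType :=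
    cycleType_eq_of_injective Sum.inr_injective (by simp) (by simp)
  rw [← hleft, ← hright, ← hdisjoint.cycleType_mul, Equiv.Perm.sumCongr_mul, mul_one, one_mul]

theorem parts_partition_permCongr (e : ι ≃ κ) (σ : Equiv.Perm ι) :
    (e.permCongr σ).partition.parts = σ.partition.parts := by
  simp only [Equiv.Perm.parts_partition, ← Equiv.Perm.sum_cycleType, cycleType_permCongr,
    Fintype.card_congr e]

theorem parts_partition_sumCongr (σ : Equiv.Perm ι) (τ : Equiv.Perm κ) :
    (Equiv.Perm.sumCongr σ τ).partition.parts = σ.partition.parts + τ.partition.parts := by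
  have hσ := card_le_univ σ.support
  have hτ := card_le_univ τ.support
  simp only [Equiv.Perm.parts_partition, ← Equiv.Perm.sum_cycleType] at *
  rw [cycleType_sumCongr, Multiset.sum_add, Fintype.card_sum, ← tsub_add_tsub_comm hσ hτ,
    Multiset.replicate_add, add_add_add_comm]

theorem parts_partition_finRotate {q : ℕ} (hq : q ≠ 0) : (finRotate q).partition.parts = {q} := by
  rw [Equiv.Perm.parts_partition, ← Equiv.Perm.sum_cycleType, Fintype.card_fin]
  obtain rfl | hq : q = 1 ∨ 2 ≤ q := by omega
  · rw [Subsingleton.elim (finRotate 1) 1]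
    simp
  · simp [cycleType_finRotate_of_le hq]

theorem nat_card_centralizer_eq_prod_parts {σ : Equiv.Perm ι} (hσ : σ.partition.parts.Nodup) :
    Nat.card (Subgroup.centralizer {σ}) = σ.partition.parts.prod := by
  rw [Equiv.Perm.parts_partition, Multiset.nodup_add] at hσ
  have hfixed : Fintype.card ι - #σ.support ≤ 1 :=
    List.nodup_replicate.mp (Multiset.coe_nodup.mp hσ.2.1)
  rw [Equiv.Perm.nat_card_centralizer, Equiv.Perm.parts_partition, Multiset.prod_add,
    Multiset.prod_replicate, one_pow, mul_one, Equiv.Perm.sum_cycleType,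
    Nat.factorial_eq_one.mpr hfixed, one_mul, prod_eq_one, mul_one]
  intro c hc
  rw [Multiset.count_eq_one_of_mem hσ.1 (Multiset.mem_toFinset.mp hc), Nat.factorial_one]

theorem pow_eq_one_of_parts_dvd {σ : Equiv.Perm ι} {N : ℕ}
    (hσ : ∀ c ∈ σ.partition.parts, c ∣ N) : σ ^ N = 1 := by
  rw [← orderOf_dvd_iff_pow_eq_one, ← Equiv.Perm.lcm_cycleType, Multiset.lcm_dvd]
  exact fun c hc => hσ c (by
    rw [Equiv.Perm.parts_partition]
    exact Multiset.mem_add.mpr (.inl hc))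

section

variable [Fintype Λ] [DecidableEq Λ]

theorem coloringPoly_permCongr (e : ι ≃ κ) (σ : Equiv.Perm ι) :
    coloringPoly Λ (e.permCongr σ) = coloringPoly Λ σ := by
  refine (sum_equiv (e.arrowCongr (.refl Λ)) (fun h => ?_) fun h _ => ?_).symm
  · simp [funext_iff, e.forall_congr_left]
  · simpa using (Equiv.prod_comp e.symm fun i => X (h i)).symm

theorem coloringPoly_sumCongr (σ : Equiv.Perm ι) (τ : Equiv.Perm κ) :
    coloringPoly Λ (Equiv.Perm.sumCongr σ τ) = coloringPoly Λ σ * coloringPoly Λ τ := by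
  rw [coloringPoly, coloringPoly, coloringPoly, sum_mul_sum, ← sum_product']
  refine sum_equiv (Equiv.sumArrowEquivProdArrow ι κ Λ) (fun h => ?_) fun h _ => ?_
  · simp [funext_iff, Equiv.sumArrowEquivProdArrow]
  · simp [Fintype.prod_sum_type, Equiv.sumArrowEquivProdArrow]

theorem comp_finRotate_eq_self_iff {α : Type*} {q : ℕ} {h : Fin (q + 1) → α} :
    h ∘ finRotate (q + 1) = h ↔ h = fun _ => h 0 := by
  refine ⟨fun hh => funext fun k => ?_, fun hh => by rw [hh]; rfl⟩
  induction k using Fin.induction with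
  | zero => rfl
  | succ i ih => rw [← ih, ← congrFun hh i.castSucc, Function.comp_apply, finRotate_apply,
      Fin.coeSucc_eq_succ]

theorem coloringPoly_finRotate {q : ℕ} (hq : q ≠ 0) :
    coloringPoly Λ (finRotate q) = psum Λ ℤ q := by
  obtain ⟨q, rfl⟩ := Nat.exists_eq_succ_of_ne_zero hq
  simp only [coloringPoly, psum, Nat.succ_eq_add_one, comp_finRotate_eq_self_iff]
  symm
  refine sum_bij' (fun i _ _ => i) (fun h _ => h 0) ?_ ?_ ?_ ?_ ?_
  · simp
  · simp
  · simp
  · exact fun h hh => (mem_filter.mp hh).2.symm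
  · simp

theorem exists_perm_parts_eq_and_coloringPoly_eq (Λ : Type*) [Fintype Λ] [DecidableEq Λ]
    {l : List ℕ} (hl : 0 ∉ l) {n : ℕ} (hn : l.sum = n) :
    ∃ σ : Equiv.Perm (Fin n),
      σ.partition.parts = l ∧ coloringPoly Λ σ = (l.map (psum Λ ℤ)).prod := by
  induction l generalizing n with
  | nil =>
    rw [List.sum_nil] at hn
    subst hn
    exact ⟨1, by simp [Equiv.Perm.parts_partition], by simp [coloringPoly]⟩
  | cons q l ih =>
    rw [List.mem_cons, not_or] at hl
    obtain ⟨τ, hparts, hpoly⟩ := ih hl.2 rfl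
    rw [List.sum_cons] at hn
    subst hn
    refine ⟨finSumFinEquiv.permCongr (Equiv.Perm.sumCongr (finRotate q) τ), ?_, ?_⟩
    · rw [parts_partition_permCongr, parts_partition_sumCongr,
        parts_partition_finRotate (Ne.symm hl.1), hparts]
      rfl
    · rw [coloringPoly_permCongr, coloringPoly_sumCongr, coloringPoly_finRotate (Ne.symm hl.1),
        hpoly, List.map_cons, List.prod_cons]

end

theorem exists_perm_coloringPoly_eq_binaryPsum (Λ : Type*) [Fintype Λ] [DecidableEq Λ] (n : ℕ) :
    ∃ σ : Equiv.Perm (Fin n), σ ^ 2 ^ n = 1 ∧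
      Nat.card (Subgroup.centralizer {σ}) = twoPowProd n ∧
      coloringPoly Λ σ = binaryPsum Λ n := by
  obtain ⟨σ, hparts, hpoly⟩ := exists_perm_parts_eq_and_coloringPoly_eq Λ
    (l := n.bitIndices.map (2 ^ ·)) (by simp) n.sum_map_two_pow_bitIndices
  have hnodup : σ.partition.parts.Nodup := by
    rw [hparts, Multiset.coe_nodup]
    exact n.bitIndices_nodup.map (Nat.pow_right_injective le_rfl)
  refine ⟨σ, pow_eq_one_of_parts_dvd fun c hc => ?_, ?_, ?_⟩
  · obtain ⟨i, hi, rfl⟩ : ∃ i ∈ n.bitIndices, 2 ^ i = c := by simpa [hparts] using hc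
    exact pow_dvd_pow 2 (i.lt_two_pow_self.le.trans (Nat.two_pow_le_of_mem_bitIndices hi))
  · rw [nat_card_centralizer_eq_prod_parts hnodup, hparts, Multiset.prod_coe, twoPowProd]
  · rw [hpoly, List.map_map, binaryPsum]
    rfl

end PowerSumPermutations

section CharactersOfUnitValue

theorem exists_natCast_eq_apply_one_of_mem_irrChar {G : Type} [Group G] {χ : G → ℂ}
    (hχ : χ ∈ IrrChar G) : ∃ d : ℕ, χ 1 = d := by
  obtain ⟨V, _, rfl⟩ := hχ
  exact ⟨_, V.char_one⟩

theorem ncard_irrChar_not_dvd_degree_eq_card_centralizer {G : Type} [Group G] [Finite G]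
    (p r : ℕ) [Fact p.Prime] {x : G} (hx : x ^ p ^ r = 1) {S : Finset (G → ℂ)}
    (hS : ↑S ⊆ IrrChar G) (hval : ∀ χ ∈ S, ∃ u : ℤˣ, χ x = (u : ℤ))
    (hcard : Nat.card (Subgroup.centralizer {x}) ≤ S.card) :
    {χ ∈ IrrChar G | ∃ m : ℕ, χ 1 = (m : ℂ) ∧ ¬ p ∣ m}.ncard =
      Nat.card (Subgroup.centralizer {x}) := by
  have hnorm : ∀ χ ∈ S, ‖χ x‖ = 1 := fun χ hχ => by
    obtain ⟨u, hu⟩ := hval χ hχ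
    rcases Int.units_eq_one_or u with rfl | rfl <;> simp [hu]
  have hset : {χ ∈ IrrChar G | ∃ m : ℕ, χ 1 = (m : ℂ) ∧ ¬ p ∣ m} = S := by
    ext χ
    constructor
    · rintro ⟨hχ, m, hm, hpm⟩
      by_contra hχS
      have hzero := apply_eq_zero_of_card_centralizer_le hS hnorm hcard hχ hχS
      have hdvd := prime_dvd_degree_sub_of_mem_irrChar hχ p r hx (d := m) (m := 0)
        (by simpa using hm) (by simpa using hzero)
      exact hpm (by simpa [Int.natCast_dvd_natCast] using hdvd)
    · intro hχ
      obtain ⟨u, hu⟩ := hval χ hχ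
      obtain ⟨d, hd⟩ := exists_natCast_eq_apply_one_of_mem_irrChar (hS hχ)
      refine ⟨hS hχ, d, hd, fun hpd => ?_⟩
      have hdvd := prime_dvd_degree_sub_of_mem_irrChar (hS hχ) p r hx (d := d)
        (by simpa using hd) hu
      have hpu : (p : ℤ) ∣ u := (dvd_sub_right (Int.natCast_dvd_natCast.mpr hpd)).mp hdvd
      exact (Nat.prime_iff_prime_int.mp Fact.out).not_isUnit (isUnit_of_dvd_unit hpu u.isUnit)
  have hbessel := sum_norm_sq_le_card_centralizer x hS
  rw [Finset.sum_congr rfl fun χ hχ => by rw [hnorm χ hχ], one_pow, Finset.sum_const,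
    nsmul_one, Nat.cast_le] at hbessel
  rw [hset, Set.ncard_coe_finset, hbessel.antisymm hcard]

end CharactersOfUnitValue

section SignedFrobeniusCharacters

open Finset MvPolynomial

variable {ι : Type} [Fintype ι] [DecidableEq ι] {L : ℕ} {α β : Fin L →₀ ℕ}

theorem charForm_frobeniusCharacter_self (hα : Function.Injective α)
    (hdeg : α.degree = Fintype.card ι + ∑ j : Fin L, (j : ℕ)) :
    charForm (Equiv.Perm ι) (fun σ => frobeniusCharacter α σ) (fun σ => frobeniusCharacter α σ) =
      1 := by
  have hiff (w : Equiv.Perm (Fin L)) : α.mapDomain w = α ↔ w = 1 := by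
    rw [← (mapDomain_perm_injective hα).eq_iff, Equiv.Perm.coe_one, Finsupp.mapDomain_id]
  rw [charForm_frobeniusCharacter α hdeg]
  simp [hiff]

theorem exists_unit_mul_frobeniusCharacter_mem_irrChar (hα : Function.Injective α)
    (hdeg : α.degree = Fintype.card ι + ∑ j : Fin L, (j : ℕ)) :
    ∃ u : ℤˣ, (fun σ : Equiv.Perm ι => ((u * frobeniusCharacter α σ : ℤ) : ℂ)) ∈
      IrrChar (Equiv.Perm ι) := by
  obtain ⟨χ, hχ, h | h⟩ := eq_or_eq_neg_of_charForm_self_eq_one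
    (frobeniusCharacter_mem_virtualCharacter α) (charForm_frobeniusCharacter_self hα hdeg)
  · exact ⟨1, by simpa [h] using hχ⟩
  · refine ⟨-1, ?_⟩
    convert hχ using 1
    funext σ
    simpa [neg_eq_iff_eq_neg] using congrFun h σ

theorem exists_mapDomain_eq_of_unit_mul_frobeniusCharacter_eq
    (hβ : β.degree = Fintype.card ι + ∑ j : Fin L, (j : ℕ)) {u v : ℤˣ}
    (hirr : (fun σ : Equiv.Perm ι => ((u * frobeniusCharacter α σ : ℤ) : ℂ)) ∈
      IrrChar (Equiv.Perm ι))
    (heq : (fun σ : Equiv.Perm ι => ((u * frobeniusCharacter α σ : ℤ) : ℂ)) =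
      fun σ => ((v * frobeniusCharacter β σ : ℤ) : ℂ)) :
    ∃ w : Equiv.Perm (Fin L), β.mapDomain w = α := by
  have hsmul (w : ℤˣ) (γ : Fin L →₀ ℕ) :
      (fun σ : Equiv.Perm ι => ((w * frobeniusCharacter γ σ : ℤ) : ℂ)) =
        ((w : ℤ) : ℂ) • fun σ => (frobeniusCharacter γ σ : ℂ) := by
    funext σ
    simp
  have hone := charForm_of_mem_irrChar hirr hirr
  rw [if_pos rfl] at hone
  nth_rw 2 [heq] at hone
  rw [hsmul, hsmul, map_smul, map_smul, LinearMap.smul_apply, charForm_frobeniusCharacter α hβ]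
    at hone
  by_contra! hne
  simp [hne] at hone

theorem exists_finset_irrChar_of_injective {A : Finset (Fin L →₀ ℕ)}
    (hA : ∀ α ∈ A, Function.Injective α ∧
      α.degree = Fintype.card ι + ∑ j : Fin L, (j : ℕ)) :
    ∃ S : Finset (Equiv.Perm ι → ℂ), ↑S ⊆ IrrChar (Equiv.Perm ι) ∧
      (∀ χ ∈ S, ∃ α ∈ A, ∃ u : ℤˣ, ∀ σ, χ σ = (u * frobeniusCharacter α σ : ℤ)) ∧
      A.card ≤ L.factorial * S.card := by
  classical
  choose! u hu using fun α hα =>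
    exists_unit_mul_frobeniusCharacter_mem_irrChar (ι := ι) (hA α hα).1 (hA α hα).2
  let f (α : Fin L →₀ ℕ) (σ : Equiv.Perm ι) : ℂ := (u α * frobeniusCharacter α σ : ℤ)
  refine ⟨A.image f, ?_, ?_, card_le_mul_card_image _ _ fun χ hχ => ?_⟩
  · rw [coe_image, Set.image_subset_iff]
    exact hu
  · simp only [forall_mem_image]
    exact fun α hα => ⟨α, hα, u α, fun σ => rfl⟩
  · obtain ⟨α, hα, rfl⟩ := mem_image.mp hχ
    have hsub : {β ∈ A | f β = f α} ⊆
        univ.image fun w : Equiv.Perm (Fin L) => α.mapDomain w := by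
      intro β hβ
      rw [mem_filter] at hβ
      obtain ⟨w, hw⟩ := exists_mapDomain_eq_of_unit_mul_frobeniusCharacter_eq (hA α hα).2
        (hu β hβ.1) hβ.2
      exact mem_image.mpr ⟨w, mem_univ w, hw⟩
    refine (card_le_card hsub).trans (card_image_le.trans ?_)
    rw [card_univ, Fintype.card_perm, Fintype.card_fin]

theorem IsUnitAlternant.exists_finset_irrChar {x : Equiv.Perm ι}
    (hx : IsUnitAlternant (Fintype.card ι) (vandermondePoly L * coloringPoly (Fin L) x)) :
    ∃ S : Finset (Equiv.Perm ι → ℂ), ↑S ⊆ IrrChar (Equiv.Perm ι) ∧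
      (∀ χ ∈ S, ∃ u : ℤˣ, χ x = (u : ℤ)) ∧
      (vandermondePoly L * coloringPoly (Fin L) x).support.card ≤ L.factorial * S.card := by
  obtain ⟨S, hS, hval, hcard⟩ := exists_finset_irrChar_of_injective (ι := ι) fun α hα =>
    ⟨hx.injective (mem_support_iff.mp hα), hx.degree_eq (mem_support_iff.mp hα)⟩
  refine ⟨S, hS, fun χ hχ => ?_, hcard⟩
  obtain ⟨α, hα, u, hu⟩ := hval χ hχ
  obtain ⟨v, hv⟩ := hx.isUnit_coeff α (mem_support_iff.mp hα)
  exact ⟨u * v, by rw [hu x, frobeniusCharacter, ← hv, Units.val_mul]⟩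

end SignedFrobeniusCharacters

/-- For the symmetric group `Sₙ` with Sylow `2`-subgroup `P`, the number of irreducible complex
characters of odd degree equals `|P/P'|`, the index of the commutator subgroup of `P` in `P`. -/
theorem mckay_symmetric_p_two (n : ℕ) (hn : 0 < n) (P : Sylow 2 (Equiv.Perm (Fin n))) :
    {χ ∈ IrrChar (Equiv.Perm (Fin n)) | ∃ m : ℕ, χ 1 = (m : ℂ) ∧ ¬ 2 ∣ m}.ncard
      = (commutator ↥(P : Subgroup (Equiv.Perm (Fin n)))).index := by
  obtain ⟨x, hx, hcentralizer, hpoly⟩ := exists_perm_coloringPoly_eq_binaryPsum (Fin n) n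
  have halternant :
      IsUnitAlternant (Fintype.card (Fin n)) (vandermondePoly n * coloringPoly (Fin n) x) := by
    rw [hpoly, Fintype.card_fin]
    exact isUnitAlternant_vandermondePoly_mul_binaryPsum n
  obtain ⟨S, hS, hval, hsupport⟩ := halternant.exists_finset_irrChar
  have hcard : Nat.card (Subgroup.centralizer {x}) ≤ S.card := by
    have h := (le_card_support_vandermondePoly_mul_binaryPsum le_rfl).trans (hpoly ▸ hsupport)
    rw [mul_comm] at h
    exact hcentralizer ▸ Nat.le_of_mul_le_mul_left h n.factorial_pos
  rw [ncard_irrChar_not_dvd_degree_eq_card_centralizer 2 n hx hS hval hcard, hcentralizer,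
    index_commutator_sylow_perm_fin]
end
end
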